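/- arXiv:1807.01894 — 3 statements merged into one kernel-verified Lean document; each statement's English description precedes it below -/
import Mathlib

section
/- Let k have characteristic 0, let G be a semisimple, connected, simply connected algebraic group with Lie algebra 𝔤, and let q be a nonzero scalar; if q is a root of unity of order ℓ, assume ℓ is odd and coprime to 3 whenever 𝔤 contains a G₂-component. Then the quantized coordinate ring O_q(G) ⊆ U_q(𝔤)° satisfies GKdim O_q(G) = dim G. -/
/-!
Background definitions: comodules over a Hopf algebra, simple comodules, direct
summands, supports, subcoalgebras, cosemisimplicity, Gelfand-Kirillov dimension,
and (measured) Grothendieck semirings of cosemisimple Hopf algebras.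
-/

open TensorProduct

/-- The data of a coaction of a Hopf algebra `H` on a `k`-vector space `X`:
a linear map `ρ : X → X ⊗ H`.  The comodule axioms are recorded separately in
`Comod.IsComodule`. -/
structure Comod (k : Type) [Field k] (H : Type) [Ring H] [HopfAlgebra k H] : Type 1 where
  X : Type
  [addCommGroup : AddCommGroup X]
  [module : Module k X]
  ρ : X →ₗ[k] X ⊗[k] H

attribute [instance] Comod.addCommGroup Comod.module

namespace Comod

variable {k : Type} [Field k] {H : Type} [Ring H] [HopfAlgebra k H]

/-- The trivial `H`-comodule `𝟏`, i.e. `k` with coaction `x ↦ x ⊗ 1`. -/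
noncomputable def unit (k : Type) [Field k] (H : Type) [Ring H] [HopfAlgebra k H] :
    Comod k H where
  X := k
  ρ := (TensorProduct.mk k k H).flip 1

/-- The regular comodule: `H` coacting on itself by comultiplication. -/
noncomputable def regular (k : Type) [Field k] (H : Type) [Ring H] [HopfAlgebra k H] :
    Comod k H where
  X := H
  ρ := Coalgebra.comul

/-- Tensor product of comodules: the coaction on `M ⊗ N` is
`(id ⊗ id ⊗ μ_H) ∘ (id ⊗ τ ⊗ id) ∘ (ρ_M ⊗ ρ_N)`. -/
noncomputable def tensor (M N : Comod k H) : Comod k H where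
  X := M.X ⊗[k] N.X
  ρ := (LinearMap.mul' k H).lTensor (M.X ⊗[k] N.X)
        ∘ₗ (TensorProduct.tensorTensorTensorComm k M.X H N.X H).toLinearMap
        ∘ₗ TensorProduct.map M.ρ N.ρ

/-- Binary direct sum of comodules. -/
noncomputable def dsum (M N : Comod k H) : Comod k H where
  X := M.X × N.X
  ρ := (LinearMap.inl k M.X N.X).rTensor H ∘ₗ M.ρ ∘ₗ LinearMap.fst k M.X N.X
     + (LinearMap.inr k M.X N.X).rTensor H ∘ₗ N.ρ ∘ₗ LinearMap.snd k M.X N.X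

/-- Finite direct sum of a family of comodules. -/
noncomputable def pi {ι : Type} [Fintype ι] (S : ι → Comod k H) : Comod k H where
  X := ∀ i, (S i).X
  ρ := letI := Classical.decEq ι
    ∑ i : ι, (LinearMap.single k (fun j => (S j).X) i).rTensor H ∘ₗ (S i).ρ
        ∘ₗ LinearMap.proj i

/-- `n`-th tensor power of a comodule (`M^{⊗0} = 𝟏`, `M^{⊗1} = M`). -/
noncomputable def tpow (M : Comod k H) : ℕ → Comod k H
  | 0 => unit k H
  | 1 => M
  | n + 2 => (M.tpow (n + 1)).tensor M

/-- A linear map is a map of comodules if it intertwines the coactions. -/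
def IsHom (M N : Comod k H) (f : M.X →ₗ[k] N.X) : Prop :=
  N.ρ ∘ₗ f = f.rTensor H ∘ₗ M.ρ

/-- Isomorphism of comodules. -/
def Iso (M N : Comod k H) : Prop :=
  ∃ e : M.X ≃ₗ[k] N.X, IsHom M N e.toLinearMap

/-- The comodule axioms (coassociativity and counitality) for a coaction. -/
def IsComodule (M : Comod k H) : Prop :=
  (M.ρ.rTensor H ∘ₗ M.ρ =
      (TensorProduct.assoc k M.X H H).symm.toLinearMap
        ∘ₗ (Coalgebra.comul (R := k) (A := H)).lTensor M.X ∘ₗ M.ρ) ∧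
  (TensorProduct.rid k M.X).toLinearMap
      ∘ₗ (Coalgebra.counit (R := k) (A := H)).lTensor M.X ∘ₗ M.ρ = LinearMap.id

/-- A subspace `N ⊆ M` is a subcomodule if the coaction restricts to `N ⊗ H`. -/
def IsSubcomodule (M : Comod k H) (N : Submodule k M.X) : Prop :=
  ∀ x ∈ N, M.ρ x ∈ LinearMap.range (N.subtype.rTensor H)

/-- Simple (hence finite-dimensional) comodules. -/
def IsSimple (M : Comod k H) : Prop :=
  M.IsComodule ∧ Nontrivial M.X ∧ FiniteDimensional k M.X ∧
    ∀ N : Submodule k M.X, M.IsSubcomodule N → N = ⊥ ∨ N = ⊤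

/-- `S` is a direct summand of `M` (as comodules): the inclusion splits. -/
def DirectSummand (S M : Comod k H) : Prop :=
  ∃ (i : S.X →ₗ[k] M.X) (p : M.X →ₗ[k] S.X),
    IsHom S M i ∧ IsHom M S p ∧ p ∘ₗ i = LinearMap.id

/-- `C` is the support of the comodule `M`: the (unique) minimal subspace
`C ⊆ H` with `ρ(M) ⊆ M ⊗ C`. -/
def IsSupport (M : Comod k H) (C : Submodule k H) : Prop :=
  (∀ x : M.X, M.ρ x ∈ LinearMap.range (C.subtype.lTensor M.X)) ∧
    ∀ C' : Submodule k H,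
      (∀ x : M.X, M.ρ x ∈ LinearMap.range (C'.subtype.lTensor M.X)) → C ≤ C'

end Comod

/-- A subspace `C ⊆ H` is a subcoalgebra if `Δ(C) ⊆ C ⊗ C`. -/
def IsSubcoalgebra (k : Type) [Field k] (H : Type) [Ring H] [HopfAlgebra k H]
    (C : Submodule k H) : Prop :=
  ∀ x ∈ C, Coalgebra.comul (R := k) x ∈
    LinearMap.range (TensorProduct.map C.subtype C.subtype)

/-- A simple subcoalgebra: a nonzero subcoalgebra with no proper nonzero
subcoalgebras. -/
def IsSimpleSubcoalgebra (k : Type) [Field k] (H : Type) [Ring H] [HopfAlgebra k H]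
    (C : Submodule k H) : Prop :=
  IsSubcoalgebra k H C ∧ C ≠ ⊥ ∧
    ∀ D : Submodule k H, D ≤ C → IsSubcoalgebra k H D → D = ⊥ ∨ D = C

/-- A Hopf algebra is cosemisimple if every subcomodule of every comodule is a
direct summand. -/
def IsCosemisimple (k : Type) [Field k] (H : Type) [Ring H] [HopfAlgebra k H] : Prop :=
  ∀ M : Comod k H, M.IsComodule →
    ∀ N : Submodule k M.X, M.IsSubcomodule N →
      ∃ N' : Submodule k M.X, M.IsSubcomodule N' ∧ IsCompl N N'

open scoped ENNReal in
/-- The Gelfand-Kirillov dimension of a `k`-algebra `A`: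
`sup_V limsup_n log(dim V^n)/log n` over finite-dimensional subspaces `V ⊆ A`
(for a finitely generated algebra this agrees with the value computed from any
finite-dimensional generating subspace containing `1`). -/
noncomputable def GKdim (k : Type) (A : Type) [Field k] [Ring A] [Algebra k A] : ℝ≥0∞ :=
  ⨆ (V : Submodule k A) (_ : FiniteDimensional k V),
    Filter.limsup
      (fun n : ℕ => ENNReal.ofReal
        (Real.log (Module.finrank k ↥(V ^ n)) / Real.log n)) Filter.atTop

/-- The (measured) Grothendieck semiring of a cosemisimple Hopf algebra `H`:
a commutative semiring `R` together with a class map `cls` on finite-dimensional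
`H`-comodules which is constant on isomorphism classes, additive on direct sums,
multiplicative on tensor products, sends `𝟏` to `1`, and induces a bijection
between iso-classes of finite-dimensional comodules and elements of `R`.
The dimension function `d_H` on `R_+(H)` is recovered as `cls M ↦ dim_k M`. -/
structure GrSemiring (k : Type) [Field k] (H : Type) [Ring H] [HopfAlgebra k H] :
    Type 1 where
  R : Type
  [commSemiring : CommSemiring R]
  cls : Comod k H → R
  cls_one : cls (Comod.unit k H) = 1
  cls_iso : ∀ M N : Comod k H, M.IsComodule → N.IsComodule →
    FiniteDimensional k M.X → FiniteDimensional k N.X → Comod.Iso M N → cls M = cls N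
  cls_dsum : ∀ M N : Comod k H, M.IsComodule → N.IsComodule →
    FiniteDimensional k M.X → FiniteDimensional k N.X →
      cls (M.dsum N) = cls M + cls N
  cls_tensor : ∀ M N : Comod k H, M.IsComodule → N.IsComodule →
    FiniteDimensional k M.X → FiniteDimensional k N.X →
      cls (M.tensor N) = cls M * cls N
  cls_surj : ∀ r : R, ∃ M : Comod k H, M.IsComodule ∧ FiniteDimensional k M.X ∧ cls M = r
  cls_inj : ∀ M N : Comod k H, M.IsComodule → N.IsComodule →
    FiniteDimensional k M.X → FiniteDimensional k N.X → cls M = cls N → Comod.Iso M N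

attribute [instance] GrSemiring.commSemiring
theorem aux_ringKrullDim_eq {R S : Type} [CommRing R] [CommRing S] [Algebra R S]
    [Algebra.IsIntegral R S] (hinj : Function.Injective (algebraMap R S)) :
    ringKrullDim S = ringKrullDim R := by
  apply le_antisymm
  · refine Order.krullDim_le_of_strictMono (PrimeSpectrum.comap (algebraMap R S)) ?_
    intro P Q h
    exact Ideal.IsIntegral.comap_lt_comap (R := R) (I := P.asIdeal) (J := Q.asIdeal) h
  · refine iSup_le fun l => ?_
    obtain ⟨Q, -, hQ, hQ'⟩ := Ideal.exists_ideal_over_prime_of_isIntegral (S := S)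
      (RelSeries.head l).asIdeal (⊥ : Ideal S)
      (by rw [← RingHom.ker_eq_comap_bot, (RingHom.injective_iff_ker_eq_bot _).mp hinj]; exact bot_le)
    have : Q.LiesOver (RelSeries.head l).asIdeal := ⟨hQ'.symm⟩
    obtain ⟨L, hL, -, -⟩ := Ideal.exists_ltSeries_of_hasGoingUp l Q
    rw [← hL]
    exact Order.LTSeries.length_le_krullDim L

theorem aux_noether {k A : Type} [Field k] [CommRing A] [Algebra k A]
    (hfg : Algebra.FiniteType k A) (d : ℕ) (hd : ringKrullDim A = d) :
    ∃ g : MvPolynomial (Fin d) k →ₐ[k] A, Function.Injective g ∧ g.Finite := by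
  have : Nontrivial A := by
    by_contra h
    rw [not_nontrivial_iff_subsingleton] at h
    rw [ringKrullDim_eq_bot_of_subsingleton] at hd
    exact absurd hd (by simp)
  obtain ⟨s, g, hg, hf⟩ := exists_finite_inj_algHom_of_fg k A
  have : s = d := by
    let := g.toRingHom.toAlgebra
    have : Module.Finite (MvPolynomial (Fin s) k) A := hf
    have h1 := aux_ringKrullDim_eq (R := MvPolynomial (Fin s) k) (S := A) hg
    rw [MvPolynomial.ringKrullDim_of_isNoetherianRing, ringKrullDim_eq_zero_of_field, hd] at h1
    simp at h1
    exact_mod_cast h1.symm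
  subst this
  exact ⟨g, hg, hf⟩

section growth
open Filter

theorem aux_limsup_le (D : ℕ → ℕ) (C d : ℕ) (h : ∀ n, 1 ≤ n → D n ≤ C * n ^ d) :
    Filter.limsup (fun n : ℕ => ENNReal.ofReal (Real.log (D n) / Real.log n)) atTop ≤ d := by
  have hlog : Tendsto (fun n : ℕ => Real.log (n : ℝ)) atTop atTop :=
    Real.tendsto_log_atTop.comp tendsto_natCast_atTop_atTop
  have h1 : Tendsto (fun n : ℕ => ENNReal.ofReal (Real.log ((C : ℝ) + 1) / Real.log n + d)) atTop
      (nhds (d : ENNReal)) := by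
    have : Tendsto (fun n : ℕ => Real.log ((C : ℝ) + 1) / Real.log n + d) atTop (nhds (0 + (d : ℝ))) :=
      (hlog.const_div_atTop _).add_const _
    have := (ENNReal.continuous_ofReal.tendsto _).comp this
    simpa [Function.comp_def] using this
  rw [← h1.limsup_eq]
  refine limsup_le_limsup ?_
  filter_upwards [eventually_ge_atTop 2] with n hn
  apply ENNReal.ofReal_le_ofReal
  have hn0 : (1 : ℝ) < n := by exact_mod_cast hn
  have hl : 0 < Real.log n := Real.log_pos hn0
  rw [div_add' _ _ _ hl.ne']
  gcongr
  rw [← Real.log_pow, ← Real.log_mul (by positivity) (by positivity)]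
  rcases Nat.eq_zero_or_pos (D n) with h0 | h0
  · rw [h0]; simp
    apply Real.log_nonneg
    have : (1 : ℝ) ≤ n ^ d := one_le_pow₀ hn0.le
    nlinarith [Nat.cast_nonneg (α := ℝ) C]
  · apply Real.log_le_log (by exact_mod_cast h0)
    have := h n (by omega)
    have h2 : (D n : ℝ) ≤ C * n ^ d := by exact_mod_cast this
    have : (0 : ℝ) ≤ n ^ d := by positivity
    nlinarith

theorem aux_le_limsup (D : ℕ → ℕ) (d : ℕ) (h : ∀ n, 1 ≤ n → n ^ d ≤ D n) :
    (d : ENNReal) ≤ Filter.limsup (fun n : ℕ => ENNReal.ofReal (Real.log (D n) / Real.log n)) atTop := by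
  refine le_trans ?_ (liminf_le_limsup)
  refine le_liminf_of_le (by isBoundedDefault) ?_
  filter_upwards [eventually_ge_atTop 2] with n hn
  have hn0 : (1 : ℝ) < n := by exact_mod_cast hn
  have hl : 0 < Real.log n := Real.log_pos hn0
  rw [← ENNReal.ofReal_natCast]
  apply ENNReal.ofReal_le_ofReal
  rw [le_div_iff₀ hl, ← Real.log_pow]
  apply Real.log_le_log (by positivity)
  exact_mod_cast h n (by omega)

theorem aux_limsup_mono (D E : ℕ → ℕ) (h : ∀ n, 1 ≤ n → D n ≤ E n) :
    Filter.limsup (fun n : ℕ => ENNReal.ofReal (Real.log (D n) / Real.log n)) atTop ≤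
    Filter.limsup (fun n : ℕ => ENNReal.ofReal (Real.log (E n) / Real.log n)) atTop := by
  refine limsup_le_limsup ?_
  filter_upwards [eventually_ge_atTop 2] with n hn
  have hn0 : (1 : ℝ) < n := by exact_mod_cast hn
  have hl : 0 < Real.log n := Real.log_pos hn0
  apply ENNReal.ofReal_le_ofReal
  refine div_le_div_of_nonneg_right ?_ hl.le
  rcases Nat.eq_zero_or_pos (D n) with h0 | h0
  · rw [h0]; simp; exact Real.log_natCast_nonneg _
  · apply Real.log_le_log (by exact_mod_cast h0)
    exact_mod_cast h n (by omega)
end growth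

section poly
variable (k : Type) [Field k] (d : ℕ)

theorem aux_finrank_restrictDegree (m : ℕ) :
    Module.finrank k (MvPolynomial.restrictDegree (Fin d) k m) = (m + 1) ^ d := by
  classical
  have b := MvPolynomial.basisRestrictSupport k {n : Fin d →₀ ℕ | ∀ i, n i ≤ m}
  have e : {n : Fin d →₀ ℕ | ∀ i, n i ≤ m} ≃ (Fin d → Fin (m+1)) :=
    { toFun := fun n i => ⟨n.1 i, Nat.lt_succ_of_le (n.2 i)⟩
      invFun := fun n => ⟨Finsupp.equivFunOnFinite.symm (fun i => (n i : ℕ)),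
        fun i => Nat.le_of_lt_succ (n i).2⟩
      left_inv := fun n => by ext; simp
      right_inv := fun n => by ext; simp }
  have := Module.finrank_eq_card_basis (b.reindex e)
  simp at this
  exact this

theorem aux_restrictDegree_mul (a b : ℕ) :
    MvPolynomial.restrictDegree (Fin d) k a * MvPolynomial.restrictDegree (Fin d) k b ≤
      MvPolynomial.restrictDegree (Fin d) k (a + b) := by
  classical
  rw [Submodule.mul_le]
  intro p hp q hq
  rw [MvPolynomial.mem_restrictDegree_iff_sup] at *
  intro i
  rw [← MvPolynomial.degreeOf_def] at *
  refine (MvPolynomial.degreeOf_mul_le i p q).trans ?_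
  have := hp i
  have := hq i
  rw [← MvPolynomial.degreeOf_def] at *
  omega

theorem aux_restrictDegree_mono {a b : ℕ} (h : a ≤ b) :
    MvPolynomial.restrictDegree (Fin d) k a ≤ MvPolynomial.restrictDegree (Fin d) k b := by
  intro p hp
  rw [MvPolynomial.mem_restrictDegree] at *
  intro s hs i
  exact (hp s hs i).trans h

theorem aux_exists_restrictDegree (p : MvPolynomial (Fin d) k) :
    ∃ m, p ∈ MvPolynomial.restrictDegree (Fin d) k m :=
  ⟨p.totalDegree, MvPolynomial.restrictTotalDegree_le_restrictDegree _ _ _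
    ((MvPolynomial.mem_restrictTotalDegree _ _ _).2 le_rfl)⟩

theorem aux_restrictDegree_le_pow (n : ℕ) :
    MvPolynomial.restrictDegree (Fin d) k n ≤ MvPolynomial.restrictDegree (Fin d) k 1 ^ n := by
  classical
  have key : ∀ n (m : Fin d →₀ ℕ), (∀ i, m i ≤ n) →
      (MvPolynomial.monomial m (1 : k)) ∈ MvPolynomial.restrictDegree (Fin d) k 1 ^ n := by
    intro n
    induction n with
    | zero =>
      intro m hm
      have : m = 0 := by ext i; simpa using hm i
      rw [this, pow_zero]
      exact Submodule.one_le.1 le_rfl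
    | succ n ih =>
      intro m hm
      have h1 : m = m.mapRange (fun x => x - 1) (by simp) + m.mapRange (fun x => min x 1) (by simp) := by
        ext i; simp only [Finsupp.add_apply, Finsupp.mapRange_apply]; omega
      have h2 : MvPolynomial.monomial m (1 : k) =
          MvPolynomial.monomial (m.mapRange (fun x => x - 1) (by simp)) 1 *
          MvPolynomial.monomial (m.mapRange (fun x => min x 1) (by simp)) 1 := by
        rw [MvPolynomial.monomial_mul, ← h1, one_mul]
      rw [h2, pow_succ]
      refine Submodule.mul_mem_mul (ih _ fun i => ?_) ?_
      · have := hm i; rw [Finsupp.mapRange_apply]; omega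
      · rw [MvPolynomial.mem_restrictDegree]
        intro s hs i
        have := MvPolynomial.support_monomial_subset hs
        rw [Finset.mem_singleton] at this
        rw [this]; simp
  intro p hp
  rw [MvPolynomial.mem_restrictDegree] at hp
  rw [MvPolynomial.as_sum p]
  refine Submodule.sum_mem _ fun s hs => ?_
  rw [show MvPolynomial.monomial s (MvPolynomial.coeff s p) = (MvPolynomial.coeff s p) • MvPolynomial.monomial s (1 : k) by
    rw [MvPolynomial.smul_monomial]; simp]
  exact Submodule.smul_mem _ _ (key n s (hp s hs))
end poly

theorem aux_GK_finite {k H : Type} [Field k] [Ring H] [Algebra k H] (d : ℕ)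
    (g : MvPolynomial (Fin d) k →ₐ[k] H) (hg : Function.Injective g)
    (hc : ∀ p h, g p * h = h * g p) (s : Finset H)
    (hs : ∀ h : H, h ∈ Submodule.span k {x : H | ∃ p, ∃ y ∈ s, x = g p * y}) :
    GKdim k H = d := by
  classical
  let P : ℕ → Submodule k H := fun m => (MvPolynomial.restrictDegree (Fin d) k m).map g.toLinearMap
  let S : Submodule k H := Submodule.span k (s : Set H)
  have : FiniteDimensional k S := FiniteDimensional.span_finset k s
  have : ∀ m, FiniteDimensional k (P m) := fun m => inferInstance
  have hfd : ∀ X Y : Submodule k H, FiniteDimensional k X → FiniteDimensional k Y →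
      FiniteDimensional k ↥(X * Y) := fun X Y hX hY =>
    (Submodule.fg_iff_finiteDimensional _).1
      (((Submodule.fg_iff_finiteDimensional _).2 hX).mul ((Submodule.fg_iff_finiteDimensional _).2 hY))
  have hfdp : ∀ X : Submodule k H, FiniteDimensional k X → ∀ n : ℕ,
      FiniteDimensional k ↥(X ^ n) := fun X hX n =>
    (Submodule.fg_iff_finiteDimensional _).1
      (((Submodule.fg_iff_finiteDimensional _).2 hX).pow n)
  have hPmono : ∀ {a b}, a ≤ b → P a ≤ P b := fun h =>
    Submodule.map_mono (aux_restrictDegree_mono k d h)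
  have hPmul : ∀ a b, P a * P b ≤ P (a + b) := fun a b => by
    change Submodule.map _ _ * Submodule.map _ _ ≤ Submodule.map _ _
    rw [← Submodule.map_mul]
    exact Submodule.map_mono (aux_restrictDegree_mul k d a b)
  have hSP : ∀ m, S * P m ≤ P m * S := fun m => by
    rw [Submodule.mul_le]
    rintro x hx _ ⟨p, hp, rfl⟩
    have := hc p x
    simp only [AlgHom.toLinearMap_apply]
    rw [← this]
    exact Submodule.mul_mem_mul ⟨p, hp, rfl⟩ hx
  have hFmono : ∀ {a b}, a ≤ b → P a * S ≤ P b * S := fun h =>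
    mul_le_mul' (hPmono h) le_rfl
  have hex : ∀ h : H, ∃ m, h ∈ P m * S := by
    intro h
    refine Submodule.span_induction (p := fun h _ => ∃ m, h ∈ P m * S) ?_ ?_ ?_ ?_ (hs h)
    · rintro _ ⟨p, y, hy, rfl⟩
      obtain ⟨m, hm⟩ := aux_exists_restrictDegree k d p
      exact ⟨m, Submodule.mul_mem_mul ⟨p, hm, rfl⟩ (Submodule.subset_span hy)⟩
    · exact ⟨0, Submodule.zero_mem _⟩
    · rintro x y _ _ ⟨a, ha⟩ ⟨b, hb⟩
      exact ⟨max a b, Submodule.add_mem _ (hFmono (le_max_left _ _) ha) (hFmono (le_max_right _ _) hb)⟩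
    · rintro c x _ ⟨a, ha⟩
      exact ⟨a, Submodule.smul_mem _ _ ha⟩
  have hexV : ∀ V : Submodule k H, FiniteDimensional k V → ∃ m, V ≤ P m * S := by
    intro V hV
    obtain ⟨t, ht⟩ := (Submodule.fg_iff_finiteDimensional V).2 hV
    choose f hf using hex
    refine ⟨t.sup f, ?_⟩
    rw [← ht, Submodule.span_le]
    intro x hx
    exact hFmono (Finset.le_sup (f := f) hx) (hf x)
  apply le_antisymm
  · refine iSup_le fun V => iSup_le fun hV => ?_
    obtain ⟨m, hm⟩ := hexV V hV
    obtain ⟨c, hc'⟩ := hexV (S * S) (hfd _ _ inferInstance inferInstance)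
    obtain ⟨c0, hc0⟩ := hex 1
    have hpow : ∀ n, V ^ n ≤ P (c0 + n * (m + c)) * S := by
      intro n
      induction n with
      | zero =>
        rw [pow_zero, Submodule.one_le]
        simpa using hc0
      | succ n ih =>
        rw [pow_succ]
        calc V ^ n * V ≤ (P (c0 + n * (m + c)) * S) * (P m * S) := mul_le_mul' ih hm
          _ = P (c0 + n * (m + c)) * (S * P m) * S := by simp only [mul_assoc]
          _ ≤ P (c0 + n * (m + c)) * (P m * S) * S :=
            mul_le_mul' (mul_le_mul' le_rfl (hSP m)) le_rfl
          _ = (P (c0 + n * (m + c)) * P m) * (S * S) := by simp only [mul_assoc]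
          _ ≤ P (c0 + n * (m + c) + m) * (P c * S) := mul_le_mul' (hPmul _ _) hc'
          _ = (P (c0 + n * (m + c) + m) * P c) * S := by simp only [mul_assoc]
          _ ≤ P (c0 + n * (m + c) + m + c) * S := mul_le_mul' (hPmul _ _) le_rfl
          _ ≤ _ := hFmono (by ring_nf; rfl)
    have hfin : ∀ a, Module.finrank k ↥(P a * S) ≤ (a + 1) ^ d * s.card := by
      intro a
      have h1 : Module.finrank k ↥(P a * S) ≤ Module.finrank k (P a) * Module.finrank k S := by
        rw [← Module.finrank_tensorProduct, ← Submodule.mulMap_range]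
        exact LinearMap.finrank_range_le _
      refine h1.trans (Nat.mul_le_mul ?_ (finrank_span_finset_le_card s))
      rw [← aux_finrank_restrictDegree k d a]
      exact Submodule.finrank_map_le _ _
    refine aux_limsup_le _ ((c0 + m + c + 1) ^ d * s.card) d fun n hn => ?_
    have := hfd (P (c0 + n * (m + c))) S inferInstance inferInstance
    refine (Submodule.finrank_mono (hpow n)).trans ((hfin _).trans ?_)
    rw [mul_right_comm, ← mul_pow]
    gcongr
    nlinarith
  · refine le_trans ?_ (le_iSup₂ (P 1) (this 1))
    refine aux_le_limsup _ d fun n hn => ?_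
    have h1 : P n ≤ P 1 ^ n := by
      change Submodule.map _ _ ≤ (Submodule.map _ _) ^ n
      rw [← Submodule.map_pow]
      exact Submodule.map_mono (aux_restrictDegree_le_pow k d n)
    have := hfdp (P 1) inferInstance n
    refine le_trans ?_ (Submodule.finrank_mono h1)
    rw [← (Submodule.equivMapOfInjective g.toLinearMap hg
      (MvPolynomial.restrictDegree (Fin d) k n)).finrank_eq, aux_finrank_restrictDegree]
    gcongr; omega
    

theorem aux_root {k A H : Type} [Field k] [CommRing A] [Algebra k A] [Ring H] [Algebra k H]
    (hfg : Algebra.FiniteType k A) (d : ℕ) (hd : ringKrullDim A = d)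
    (φ : A →ₐ[k] H) (hφ : Function.Injective φ) (hc : ∀ a : A, ∀ h : H, φ a * h = h * φ a)
    (s : Finset H) (hs : ∀ h : H, h ∈ Submodule.span k {x : H | ∃ a : A, ∃ y ∈ s, x = φ a * y}) :
    GKdim k H = d := by
  classical
  obtain ⟨g, hg, hf⟩ := aux_noether hfg d hd
  let := g.toRingHom.toAlgebra
  have : Module.Finite (MvPolynomial (Fin d) k) A := hf
  obtain ⟨t, ht⟩ := Module.Finite.fg_top (R := MvPolynomial (Fin d) k) (M := A)
  refine aux_GK_finite d (φ.comp g) (hφ.comp hg) (fun p h => hc _ _)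
    (Finset.image₂ (fun a y => φ a * y) t s) fun h => ?_
  refine Submodule.span_le.2 ?_ (hs h)
  rintro _ ⟨a, y, hy, rfl⟩
  have ha : a ∈ Submodule.span (MvPolynomial (Fin d) k) (t : Set A) := by rw [ht]; trivial
  refine Submodule.span_induction (p := fun a _ => φ a * y ∈ Submodule.span k _) ?_ ?_ ?_ ?_ ha
  · intro a ha
    exact Submodule.subset_span ⟨1, φ a * y, Finset.mem_image₂_of_mem ha hy, by simp⟩
  · simp
  · intro a b _ _ h1 h2
    rw [map_add, add_mul]; exact Submodule.add_mem _ h1 h2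
  · intro p a _ h1
    have h3 : p • a = g p * a := rfl
    rw [h3, map_mul, mul_assoc]
    refine Submodule.span_induction (p := fun z _ => φ (g p) * z ∈ Submodule.span k _) ?_ ?_ ?_ ?_ h1
    · rintro _ ⟨r, z, hz, rfl⟩
      exact Submodule.subset_span ⟨p * r, z, hz, by simp [mul_assoc]⟩
    · simp
    · intro a b _ _ h1 h2
      rw [mul_add]; exact Submodule.add_mem _ h1 h2
    · intro c x _ h
      rw [mul_smul_comm]; exact Submodule.smul_mem _ _ h

namespace Comod

variable {k : Type} [Field k] {H : Type} [Ring H] [HopfAlgebra k H]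

/-- contraction of the right factor -/
noncomputable def ctr (X : Type) [AddCommGroup X] [Module k X] (b : Module.Dual k H) :
    X ⊗[k] H →ₗ[k] X :=
  (TensorProduct.rid k X).toLinearMap ∘ₗ b.lTensor X

@[simp] theorem ctr_tmul (X : Type) [AddCommGroup X] [Module k X] (b : Module.Dual k H) (x : X)
    (h : H) : ctr X b (x ⊗ₜ h) = b h • x := by simp [ctr]

theorem ctr_sep (X : Type) [AddCommGroup X] [Module k X] (x : X ⊗[k] H)
    (h : ∀ b : Module.Dual k H, ctr X b x = 0) : x = 0 := by
  classical
  let 𝒞 := Module.Basis.ofVectorSpace k H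
  apply (TensorProduct.equivFinsuppOfBasisRight (M := X) 𝒞).injective
  rw [map_zero]
  ext i
  rw [Finsupp.zero_apply, ← h (𝒞.coord i)]
  induction x using TensorProduct.induction_on with
  | zero => simp
  | tmul x y => simp
  | add x y hx hy =>
    have key : ∀ x : X ⊗[k] H, (TensorProduct.equivFinsuppOfBasisRight (M := X) 𝒞) x i =
        ctr X (𝒞.coord i) x := by
      intro x
      induction x using TensorProduct.induction_on with
      | zero => simp
      | tmul x y => simp
      | add x y hx hy => simp [hx, hy]
    exact key _

theorem ctr_ext (X : Type) [AddCommGroup X] [Module k X] (x y : X ⊗[k] H)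
    (h : ∀ b : Module.Dual k H, ctr X b x = ctr X b y) : x = y := by
  rw [← sub_eq_zero]
  exact ctr_sep X _ fun b => by rw [map_sub, h, sub_self]

theorem ctr_rTensor {X Y : Type} [AddCommGroup X] [Module k X] [AddCommGroup Y] [Module k Y]
    (f : X →ₗ[k] Y) (b : Module.Dual k H) (x : X ⊗[k] H) :
    ctr Y b (f.rTensor H x) = f (ctr X b x) := by
  induction x using TensorProduct.induction_on with
  | zero => simp
  | tmul x y => simp
  | add x y hx hy => simp [hx, hy]

/-- action of the dual, for an unbundled coaction -/
noncomputable def opR {X : Type} [AddCommGroup X] [Module k X] (ρ : X →ₗ[k] X ⊗[k] H) :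
    Module.Dual k H →ₗ[k] Module.End k X where
  toFun b := ctr X b ∘ₗ ρ
  map_add' b c := by ext m; simp [ctr, LinearMap.lTensor_add]
  map_smul' b c := by ext m; simp [ctr, LinearMap.lTensor_smul]

/-- action of the dual -/
noncomputable def op (M : Comod k H) : Module.Dual k H →ₗ[k] Module.End k M.X := opR M.ρ

theorem opR_apply {X : Type} [AddCommGroup X] [Module k X] (ρ : X →ₗ[k] X ⊗[k] H)
    (b : Module.Dual k H) (m : X) : opR ρ b m = ctr X b (ρ m) := rfl

theorem op_apply (M : Comod k H) (b : Module.Dual k H) (m : M.X) : M.op b m = ctr M.X b (M.ρ m) := rfl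

/-- convolution -/
noncomputable def conv (b c : Module.Dual k H) : Module.Dual k H :=
  LinearMap.mul' k k ∘ₗ TensorProduct.map b c ∘ₗ Coalgebra.comul

theorem ctr_conv (X : Type) [AddCommGroup X] [Module k X] (b c : Module.Dual k H)
    (x : X ⊗[k] H) :
    ctr X b (ctr (X ⊗[k] H) c ((TensorProduct.assoc k X H H).symm
      ((Coalgebra.comul (R := k) (A := H)).lTensor X x))) = ctr X (conv b c) x := by
  induction x using TensorProduct.induction_on with
  | zero => simp
  | tmul x y =>
    simp only [LinearMap.lTensor_tmul, ctr_tmul, conv, LinearMap.comp_apply]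
    induction (Coalgebra.comul (R := k) y) using TensorProduct.induction_on with
    | zero => simp
    | tmul u v =>
      simp only [TensorProduct.assoc_symm_tmul, ctr_tmul, map_smul, TensorProduct.map_tmul,
        LinearMap.mul'_apply, smul_smul]
      rw [mul_comm]
    | add u v hu hv => simp only [TensorProduct.tmul_add, map_add, hu, hv, add_smul]
  | add x y hx hy => simp only [map_add, hx, hy]

theorem isComodule_iff (M : Comod k H) : M.IsComodule ↔
    (∀ b c, M.op b ∘ₗ M.op c = M.op (conv b c)) ∧ M.op (Coalgebra.counit (R := k) (A := H)) = LinearMap.id := by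
  have e1 : ∀ (b c : Module.Dual k H) (m : M.X), ctr M.X b (ctr (M.X ⊗[k] H) c (M.ρ.rTensor H (M.ρ m))) =
      M.op b (M.op c m) := by
    intro b c m
    rw [ctr_rTensor]; rfl
  constructor
  · rintro ⟨h1, h2⟩
    refine ⟨fun b c => ?_, h2⟩
    ext m
    rw [LinearMap.comp_apply, ← e1, op_apply, ← ctr_conv]
    have := LinearMap.congr_fun h1 m
    simp only [LinearMap.comp_apply] at this
    rw [this]; rfl
  · rintro ⟨h1, h2⟩
    refine ⟨?_, h2⟩
    apply LinearMap.ext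
    intro m
    refine ctr_ext _ _ _ fun c => ctr_ext _ _ _ fun b => ?_
    rw [LinearMap.comp_apply, e1, ← LinearMap.comp_apply, h1, op_apply, ← ctr_conv]
    rfl

theorem isHom_iff (M N : Comod k H) (f : M.X →ₗ[k] N.X) :
    IsHom M N f ↔ ∀ b m, N.op b (f m) = f (M.op b m) := by
  constructor
  · intro h b m
    have := LinearMap.congr_fun h m
    simp only [LinearMap.comp_apply] at this
    rw [op_apply, this, ctr_rTensor]; rfl
  · intro h
    apply LinearMap.ext
    intro m
    refine ctr_ext _ _ _ fun b => ?_
    rw [LinearMap.comp_apply, LinearMap.comp_apply, ctr_rTensor]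
    exact h b m

theorem isSubcomodule_iff (M : Comod k H) (N : Submodule k M.X) :
    M.IsSubcomodule N ↔ ∀ b, ∀ x ∈ N, M.op b x ∈ N := by
  constructor
  · intro h b x hx
    obtain ⟨y, hy⟩ := h x hx
    rw [op_apply, ← hy, ctr_rTensor]
    exact (ctr N b y).2
  · intro h x hx
    rw [← rTensor_mkQ, LinearMap.mem_ker]
    refine ctr_sep _ _ fun b => ?_
    rw [ctr_rTensor]
    rw [Submodule.mkQ_apply, Submodule.Quotient.mk_eq_zero]
    exact h b x hx

theorem rTensor_subtype_injective (M : Comod k H) (N : Submodule k M.X) :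
    Function.Injective (N.subtype.rTensor H) :=
  Module.Flat.rTensor_preserves_injective_linearMap _ N.subtype_injective

/-- restricted coaction -/
noncomputable def subρ (M : Comod k H) (N : Submodule k M.X) (h : M.IsSubcomodule N) :
    N →ₗ[k] N ⊗[k] H :=
  (LinearEquiv.ofInjective _ (rTensor_subtype_injective M N)).symm.toLinearMap ∘ₗ
    LinearMap.codRestrict _ (M.ρ ∘ₗ N.subtype) (fun x => h x x.2)

/-- restriction to a subcomodule -/
noncomputable def sub (M : Comod k H) (N : Submodule k M.X) (h : M.IsSubcomodule N) : Comod k H where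
  X := N
  ρ := subρ M N h

theorem sub_hom (M : Comod k H) (N : Submodule k M.X) (h : M.IsSubcomodule N) :
    IsHom (M.sub N h) M N.subtype := by
  apply LinearMap.ext
  intro x
  have := LinearEquiv.apply_symm_apply (LinearEquiv.ofInjective _ (rTensor_subtype_injective M N))
    (LinearMap.codRestrict _ (M.ρ ∘ₗ N.subtype) (fun x => h x x.2) x)
  exact (congrArg Subtype.val this).symm

theorem sub_op (M : Comod k H) (N : Submodule k M.X) (h : M.IsSubcomodule N) (b : Module.Dual k H)
    (x : N) : ((opR (subρ M N h) b x : N) : M.X) = M.op b (x : M.X) :=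
  ((isHom_iff _ _ _).1 (sub_hom M N h) b x).symm

theorem sub_isComodule (M : Comod k H) (N : Submodule k M.X) (h : M.IsSubcomodule N)
    (hM : M.IsComodule) : (M.sub N h).IsComodule := by
  rw [isComodule_iff] at hM ⊢
  change (∀ b c, opR (subρ M N h) b ∘ₗ opR (subρ M N h) c = opR (subρ M N h) (conv b c)) ∧
    opR (subρ M N h) _ = LinearMap.id
  refine ⟨fun b c => LinearMap.ext fun x => Subtype.ext ?_, LinearMap.ext fun x => Subtype.ext ?_⟩
  · rw [LinearMap.comp_apply, sub_op, sub_op, sub_op, ← hM.1]; rfl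
  · rw [sub_op, hM.2]; rfl

/-- coaction on the direct sum -/
noncomputable def dsumρ (M N : Comod k H) : M.X × N.X →ₗ[k] (M.X × N.X) ⊗[k] H := (M.dsum N).ρ

theorem dsum_op (M N : Comod k H) (b : Module.Dual k H) (x : M.X × N.X) :
    opR (dsumρ M N) b x = (M.op b x.1, N.op b x.2) := by
  rw [opR_apply]
  change ctr (M.X × N.X) b ((LinearMap.inl k M.X N.X).rTensor H (M.ρ x.1) +
    (LinearMap.inr k M.X N.X).rTensor H (N.ρ x.2)) = _
  rw [map_add, ctr_rTensor, ctr_rTensor]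
  simp [op_apply]

theorem dsum_isComodule (M N : Comod k H) (hM : M.IsComodule) (hN : N.IsComodule) :
    (M.dsum N).IsComodule := by
  rw [isComodule_iff] at *
  change (∀ b c, opR (dsumρ M N) b ∘ₗ opR (dsumρ M N) c = opR (dsumρ M N) (conv b c)) ∧
    opR (dsumρ M N) _ = LinearMap.id
  refine ⟨fun b c => LinearMap.ext fun x => ?_, LinearMap.ext fun x => ?_⟩
  · rw [LinearMap.comp_apply, dsum_op, dsum_op, dsum_op, ← hM.1, ← hN.1]; rfl
  · rw [dsum_op, hM.2, hN.2]; rfl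

theorem regular_isComodule : (regular k H).IsComodule := by
  constructor
  · exact (Coalgebra.coassoc_symm (R := k) (A := H)).symm
  · refine LinearMap.ext fun (x : H) => ?_
    change TensorProduct.rid k H ((Coalgebra.counit (R := k) (A := H)).lTensor H (Coalgebra.comul x)) = x
    rw [Coalgebra.lTensor_counit_comul]
    simp

/-- coaction on the unit -/
noncomputable def unitρ (k : Type) [Field k] (H : Type) [Ring H] [HopfAlgebra k H] :
    k →ₗ[k] k ⊗[k] H := (unit k H).ρ

theorem unit_op (b : Module.Dual k H) (x : k) : opR (unitρ k H) b x = b 1 * x := by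
  rw [opR_apply]
  change ctr k b (x ⊗ₜ 1) = _
  simp

theorem unit_isComodule : (unit k H).IsComodule := by
  rw [isComodule_iff]
  change (∀ b c, opR (unitρ k H) b ∘ₗ opR (unitρ k H) c = opR (unitρ k H) (conv b c)) ∧
    opR (unitρ k H) _ = LinearMap.id
  refine ⟨fun b c => LinearMap.ext fun x => ?_, LinearMap.ext fun x => ?_⟩
  · rw [LinearMap.comp_apply, unit_op, unit_op, unit_op]
    simp [conv, Algebra.TensorProduct.one_def, mul_assoc]
  · rw [unit_op]
    simp

/-- the auxiliary multiplication map -/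
noncomputable def tmulAux (X Y B : Type) [AddCommGroup X] [Module k X] [AddCommGroup Y] [Module k Y]
    [Ring B] [Algebra k B] : (X ⊗[k] B) ⊗[k] (Y ⊗[k] B) →ₗ[k] (X ⊗[k] Y) ⊗[k] B :=
  (LinearMap.mul' k B).lTensor (X ⊗[k] Y)
        ∘ₗ (TensorProduct.tensorTensorTensorComm k X B Y B).toLinearMap

@[simp] theorem tmulAux_tmul (X Y B : Type) [AddCommGroup X] [Module k X] [AddCommGroup Y] [Module k Y]
    [Ring B] [Algebra k B] (x : X) (y : Y) (a b : B) :
    tmulAux (k := k) X Y B ((x ⊗ₜ a) ⊗ₜ (y ⊗ₜ b)) = (x ⊗ₜ y) ⊗ₜ (a * b) := by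
  simp [tmulAux]

/-- coaction on the tensor product -/
noncomputable def tensorρ (M N : Comod k H) : M.X ⊗[k] N.X →ₗ[k] (M.X ⊗[k] N.X) ⊗[k] H :=
  (M.tensor N).ρ

theorem tensor_rho (M N : Comod k H) (m : M.X) (n : N.X) :
    tensorρ M N (m ⊗ₜ[k] n) = tmulAux M.X N.X H (M.ρ m ⊗ₜ N.ρ n) := rfl

theorem tensor_aux1 (X Y : Type) [AddCommGroup X] [Module k X] [AddCommGroup Y] [Module k Y]
    (x : X ⊗[k] H) (y : Y ⊗[k] H) :
    (Coalgebra.comul (R := k) (A := H)).lTensor (X ⊗[k] Y) (tmulAux X Y H (x ⊗ₜ y)) =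
    tmulAux X Y (H ⊗[k] H) ((Coalgebra.comul (R := k) (A := H)).lTensor X x ⊗ₜ
      (Coalgebra.comul (R := k) (A := H)).lTensor Y y) := by
  induction x using TensorProduct.induction_on with
  | zero => simp
  | tmul x a =>
    induction y using TensorProduct.induction_on with
    | zero => simp
    | tmul y b => simp
    | add y y' hy hy' => simp only [TensorProduct.tmul_add, map_add, hy, hy']
  | add x x' hx hx' => simp only [TensorProduct.add_tmul, map_add, hx, hx']

theorem tensor_aux2 (M N : Comod k H)
    (x : M.X ⊗[k] H) (y : N.X ⊗[k] H) :
    TensorProduct.assoc k (M.X ⊗[k] N.X) H H ((tensorρ M N).rTensor H (tmulAux M.X N.X H (x ⊗ₜ y))) =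
    tmulAux M.X N.X (H ⊗[k] H) (TensorProduct.assoc k M.X H H (M.ρ.rTensor H x) ⊗ₜ
      TensorProduct.assoc k N.X H H (N.ρ.rTensor H y)) := by
  induction x using TensorProduct.induction_on with
  | zero => simp
  | tmul x a =>
    induction y using TensorProduct.induction_on with
    | zero => simp
    | tmul y b =>
      rw [tmulAux_tmul, LinearMap.rTensor_tmul, LinearMap.rTensor_tmul, LinearMap.rTensor_tmul, tensor_rho]
      generalize M.ρ x = u
      generalize N.ρ y = v
      induction u using TensorProduct.induction_on with
      | zero => simp
      | tmul u c =>
        induction v using TensorProduct.induction_on with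
        | zero => simp
        | tmul v d => simp
        | add y y' hy hy' => simp only [TensorProduct.tmul_add, TensorProduct.add_tmul, map_add, hy, hy']
      | add y y' hy hy' => simp only [TensorProduct.add_tmul, map_add, hy, hy']
    | add y y' hy hy' => simp only [TensorProduct.tmul_add, map_add, hy, hy']
  | add x x' hx hx' => simp only [TensorProduct.add_tmul, map_add, hx, hx']

theorem tensor_isComodule (M N : Comod k H) (hM : M.IsComodule) (hN : N.IsComodule) :
    (M.tensor N).IsComodule := by
  have e : ∀ (M : Comod k H), M.IsComodule → ∀ m, TensorProduct.assoc k M.X H H (M.ρ.rTensor H (M.ρ m)) =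
      (Coalgebra.comul (R := k) (A := H)).lTensor M.X (M.ρ m) := by
    intro M hM m
    have := LinearMap.congr_fun hM.1 m
    simp only [LinearMap.comp_apply] at this
    rw [this]
    simp
  constructor
  · apply TensorProduct.ext'
    intro m n
    apply (TensorProduct.assoc k (M.X ⊗[k] N.X) H H).injective
    refine Eq.trans ((tensor_aux2 M N (M.ρ m) (N.ρ n))) ?_
    rw [e M hM, e N hN, ← tensor_aux1]
    exact ((TensorProduct.assoc k (M.X ⊗[k] N.X) H H).apply_symm_apply _).symm
  · apply TensorProduct.ext'
    intro m n
    have key : ∀ (x : M.X ⊗[k] H) (y : N.X ⊗[k] H), ctr (M.X ⊗[k] N.X)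
        (Coalgebra.counit (R := k) (A := H)) (tmulAux M.X N.X H (x ⊗ₜ y)) =
        ctr M.X (Coalgebra.counit (R := k) (A := H)) x ⊗ₜ ctr N.X (Coalgebra.counit (R := k) (A := H)) y := by
      intro x y
      induction x using TensorProduct.induction_on with
      | zero => simp
      | tmul x a =>
        induction y using TensorProduct.induction_on with
        | zero => simp
        | tmul y b => rw [tmulAux_tmul, ctr_tmul, ctr_tmul, ctr_tmul, TensorProduct.smul_tmul_smul, Bialgebra.counit_mul]
        | add y y' hy hy' => simp only [TensorProduct.tmul_add, map_add, hy, hy']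
      | add x x' hx hx' => simp only [TensorProduct.add_tmul, map_add, hx, hx']
    refine Eq.trans (key _ _) ?_
    have h1 := LinearMap.congr_fun hM.2 m
    have h2 := LinearMap.congr_fun hN.2 n
    exact congrArg₂ (fun a b => a ⊗ₜ[k] b) h1 h2

end Comod

namespace Comod

variable {k : Type} [Field k] {H : Type} [Ring H] [HopfAlgebra k H]

/-- contraction of the left factor -/
noncomputable def ctl {X : Type} [AddCommGroup X] [Module k X] (φ : Module.Dual k X) :
    X ⊗[k] H →ₗ[k] H :=
  (TensorProduct.lid k H).toLinearMap ∘ₗ φ.rTensor H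

@[simp] theorem ctl_tmul {X : Type} [AddCommGroup X] [Module k X] (φ : Module.Dual k X) (x : X)
    (h : H) : ctl φ (x ⊗ₜ h) = φ x • h := by simp [ctl]

/-- matrix coefficients -/
noncomputable def coefR {X : Type} [AddCommGroup X] [Module k X] (ρ : X →ₗ[k] X ⊗[k] H) :
    Module.Dual k X →ₗ[k] X →ₗ[k] H where
  toFun φ := ctl φ ∘ₗ ρ
  map_add' b c := by ext m; simp [ctl, LinearMap.rTensor_add]
  map_smul' b c := by ext m; simp [ctl, LinearMap.rTensor_smul]

theorem coefR_apply {X : Type} [AddCommGroup X] [Module k X] (ρ : X →ₗ[k] X ⊗[k] H)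
    (φ : Module.Dual k X) (m : X) : coefR ρ φ m = ctl φ (ρ m) := rfl

theorem dual_coefR {X : Type} [AddCommGroup X] [Module k X] (ρ : X →ₗ[k] X ⊗[k] H)
    (φ : Module.Dual k X) (m : X) (b : Module.Dual k H) :
    b (coefR ρ φ m) = φ (opR ρ b m) := by
  rw [coefR_apply, opR_apply]
  induction (ρ m) using TensorProduct.induction_on with
  | zero => simp
  | tmul x y => simp [mul_comm]
  | add x y hx hy => simp [hx, hy]

/-- coefficient space -/
noncomputable def cfR {X : Type} [AddCommGroup X] [Module k X] (ρ : X →ₗ[k] X ⊗[k] H) :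
    Submodule k H := Submodule.map₂ (coefR ρ) ⊤ ⊤

/-- coefficient space -/
noncomputable def cf (M : Comod k H) : Submodule k H := cfR M.ρ

theorem coefR_mem {X : Type} [AddCommGroup X] [Module k X] (ρ : X →ₗ[k] X ⊗[k] H)
    (φ : Module.Dual k X) (m : X) : coefR ρ φ m ∈ cfR ρ :=
  Submodule.apply_mem_map₂ _ trivial trivial

theorem cfR_le {X : Type} [AddCommGroup X] [Module k X] (ρ : X →ₗ[k] X ⊗[k] H) (W : Submodule k H) :
    cfR ρ ≤ W ↔ ∀ φ m, coefR ρ φ m ∈ W := by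
  rw [cfR, Submodule.map₂_le]
  simp

theorem cf_fd (M : Comod k H) [FiniteDimensional k M.X] : FiniteDimensional k M.cf := by
  rw [← Submodule.fg_iff_finiteDimensional]
  exact Submodule.FG.map₂ _ Module.Finite.fg_top Module.Finite.fg_top

theorem op_eq_zero_iff (M : Comod k H) (b : Module.Dual k H) :
    M.op b = 0 ↔ ∀ x ∈ M.cf, b x = 0 := by
  constructor
  · intro h x hx
    have : M.cf ≤ LinearMap.ker b := by
      rw [cf, cfR_le]
      intro φ m
      rw [LinearMap.mem_ker, dual_coefR]
      change φ (M.op b m) = 0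
      rw [h]; simp
    exact this hx
  · intro h
    ext m
    rw [LinearMap.zero_apply, ← Module.forall_dual_apply_eq_zero_iff k]
    intro φ
    exact (dual_coefR M.ρ φ m b).symm.trans (h _ (coefR_mem _ _ _))

theorem finrank_cf (M : Comod k H) [FiniteDimensional k M.X] :
    Module.finrank k M.cf = Module.finrank k (LinearMap.range M.op) := by
  have hk : LinearMap.ker M.op = M.cf.dualAnnihilator := by
    ext b
    rw [LinearMap.mem_ker, op_eq_zero_iff, Submodule.mem_dualAnnihilator]
  have := cf_fd M
  rw [← (LinearMap.quotKerEquivRange M.op).finrank_eq, hk,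
    (Subspace.quotAnnihilatorEquiv M.cf).finrank_eq, Subspace.dual_finrank_eq]

theorem cf_of_injective (M N : Comod k H) (f : M.X →ₗ[k] N.X) (hf : IsHom M N f)
    (hi : Function.Injective f) : M.cf ≤ N.cf := by
  rw [cf, cfR_le]
  intro φ m
  obtain ⟨g, hg⟩ := LinearMap.exists_leftInverse_of_injective f (LinearMap.ker_eq_bot.2 hi)
  have : coefR M.ρ φ m = coefR N.ρ (φ ∘ₗ g) (f m) := by
    rw [coefR_apply, coefR_apply]
    have h := LinearMap.congr_fun hf m
    simp only [LinearMap.comp_apply] at h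
    rw [h]
    induction (M.ρ m) using TensorProduct.induction_on with
    | zero => simp
    | tmul x y =>
      have := LinearMap.congr_fun hg x
      simp only [LinearMap.comp_apply, LinearMap.id_apply] at this
      simp [this]
    | add x y hx hy => simp [hx, hy]
  rw [this]
  exact coefR_mem _ _ _

theorem Iso.symm' {M N : Comod k H} (h : Iso M N) : Iso N M := by
  obtain ⟨e, he⟩ := h
  refine ⟨e.symm, ?_⟩
  rw [isHom_iff] at *
  intro b n
  apply e.injective
  have := he b (e.symm n)
  simp at this
  simp [this]

theorem Iso.cf_eq {M N : Comod k H} (h : Iso M N) : M.cf = N.cf := by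
  obtain ⟨e', he'⟩ := h.symm'
  obtain ⟨e, he⟩ := h
  exact le_antisymm (cf_of_injective _ _ _ he e.injective) (cf_of_injective _ _ _ he' e'.injective)

theorem dsum_cf (M N : Comod k H) : (M.dsum N).cf = M.cf ⊔ N.cf := by
  apply le_antisymm
  · change cfR (dsumρ M N) ≤ _
    rw [cfR_le]
    intro φ x
    have : coefR (dsumρ M N) φ x = coefR M.ρ (φ ∘ₗ LinearMap.inl k _ _) x.1 +
        coefR N.ρ (φ ∘ₗ LinearMap.inr k _ _) x.2 := by
      rw [← sub_eq_zero, ← Module.forall_dual_apply_eq_zero_iff k]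
      intro b
      rw [map_sub, map_add, dual_coefR, dual_coefR, dual_coefR, dsum_op, LinearMap.comp_apply,
        LinearMap.comp_apply, ← map_add, sub_eq_zero]
      congr 1
      simp [op]
    rw [this]
    exact Submodule.add_mem_sup (coefR_mem _ _ _) (coefR_mem _ _ _)
  · refine sup_le ?_ ?_
    · refine cf_of_injective M (M.dsum N) (LinearMap.inl k M.X N.X) ?_ LinearMap.inl_injective
      refine (isHom_iff _ _ _).2 fun b m => ?_
      refine (dsum_op M N b _).trans ?_
      exact Prod.ext rfl (map_zero (N.op b))
    · refine cf_of_injective N (M.dsum N) (LinearMap.inr k M.X N.X) ?_ LinearMap.inr_injective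
      refine (isHom_iff _ _ _).2 fun b m => ?_
      refine (dsum_op M N b _).trans ?_
      exact Prod.ext (map_zero (M.op b)) rfl

theorem coefR_tensor (M N : Comod k H) (φ : Module.Dual k M.X) (ψ : Module.Dual k N.X) (m : M.X) (n : N.X) :
    coefR (tensorρ M N) (TensorProduct.dualDistrib k _ _ (φ ⊗ₜ ψ)) (m ⊗ₜ n) =
      coefR M.ρ φ m * coefR N.ρ ψ n := by
  rw [coefR_apply, coefR_apply, coefR_apply, tensor_rho]
  generalize M.ρ m = x
  generalize N.ρ n = y
  induction x using TensorProduct.induction_on with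
  | zero => simp
  | tmul x a =>
    induction y using TensorProduct.induction_on with
    | zero => simp
    | tmul y b => rw [tmulAux_tmul, ctl_tmul, ctl_tmul, ctl_tmul, TensorProduct.dualDistrib_apply, smul_mul_smul_comm]
    | add y y' hy hy' => simp only [TensorProduct.tmul_add, map_add, hy, hy', mul_add]
  | add x x' hx hx' => simp only [TensorProduct.add_tmul, map_add, hx, hx', add_mul]

theorem tensor_cf (M N : Comod k H) [FiniteDimensional k M.X] [FiniteDimensional k N.X] :
    (M.tensor N).cf = M.cf * N.cf := by
  apply le_antisymm
  · change cfR (tensorρ M N) ≤ _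
    rw [cfR_le]
    intro φ x
    obtain ⟨t, rfl⟩ := (TensorProduct.dualDistribEquiv k M.X N.X).surjective φ
    change coefR (tensorρ M N) (TensorProduct.dualDistrib k _ _ t) x ∈ _
    induction t using TensorProduct.induction_on with
    | zero => simp
    | tmul φ ψ =>
      induction x using TensorProduct.induction_on with
      | zero => simp
      | tmul m n =>
        rw [coefR_tensor]
        exact Submodule.mul_mem_mul (coefR_mem _ _ _) (coefR_mem _ _ _)
      | add x y hx hy => rw [map_add]; exact Submodule.add_mem _ hx hy
    | add x y hx hy =>
      rw [map_add, map_add, LinearMap.add_apply]; exact Submodule.add_mem _ hx hy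
  · rw [Submodule.mul_le]
    intro x hx y hy
    have h1 : ∀ φ m, N.cf ≤ (M.tensor N).cf.comap (LinearMap.mulLeft k (coefR M.ρ φ m)) := by
      intro φ m
      rw [cf, cfR_le]
      intro ψ n
      rw [Submodule.mem_comap, LinearMap.mulLeft_apply, ← coefR_tensor]
      exact coefR_mem (tensorρ M N) _ _
    have h2 : M.cf ≤ (M.tensor N).cf.comap (LinearMap.mulRight k y) := by
      rw [cf, cfR_le]
      intro φ m
      exact h1 φ m hy
    exact h2 hx

theorem unit_cf : (unit k H).cf = 1 := by
  apply le_antisymm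
  · change cfR (unitρ k H) ≤ _
    rw [cfR_le]
    intro φ x
    rw [coefR_apply]
    change ctl φ (x ⊗ₜ 1) ∈ _
    rw [ctl_tmul]
    exact Submodule.smul_mem _ _ (Submodule.one_le.1 le_rfl)
  · rw [Submodule.one_le]
    have : coefR (unitρ k H) LinearMap.id (1 : k) = (1 : H) := by
      rw [coefR_apply]
      change ctl _ ((1 : k) ⊗ₜ 1) = _
      simp
    rw [← this]
    exact coefR_mem _ _ _

/-- powers of a comodule -/
noncomputable def pw (M : Comod k H) : ℕ → Comod k H
  | 0 => unit k H
  | n + 1 => (M.pw n).tensor M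

theorem pw_fd (M : Comod k H) [h : FiniteDimensional k M.X] : ∀ n, FiniteDimensional k (M.pw n).X
  | 0 => inferInstanceAs (FiniteDimensional k k)
  | n + 1 => by
    have := pw_fd M n
    exact inferInstanceAs (FiniteDimensional k ((M.pw n).X ⊗[k] M.X))

theorem pw_isComodule (M : Comod k H) (h : M.IsComodule) : ∀ n, (M.pw n).IsComodule
  | 0 => unit_isComodule
  | n + 1 => tensor_isComodule _ _ (pw_isComodule M h n) h

theorem pw_cf (M : Comod k H) [h : FiniteDimensional k M.X] : ∀ n, (M.pw n).cf = M.cf ^ n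
  | 0 => by rw [pow_zero]; exact unit_cf
  | n + 1 => by
    have := pw_fd M n
    rw [pow_succ, ← pw_cf M n]
    exact tensor_cf _ _

theorem exists_cf_ge (V : Submodule k H) [hV : FiniteDimensional k V] :
    ∃ M : Comod k H, M.IsComodule ∧ FiniteDimensional k M.X ∧ V ≤ M.cf := by
  let R := regular k H
  have hR : R.IsComodule := regular_isComodule
  have hR' := (isComodule_iff R).1 hR
  let act : H →ₗ[k] Module.Dual k H →ₗ[k] H := (opR (Coalgebra.comul (R := k) (A := H))).flip
  have hfin : ∀ v : H, (LinearMap.range (act v)).FG := by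
    intro v
    have : ∀ x : H ⊗[k] H, ∃ W : Submodule k H, W.FG ∧ ∀ b : Module.Dual k H, ctr H b x ∈ W := by
      intro x
      induction x using TensorProduct.induction_on with
      | zero => exact ⟨⊥, Submodule.fg_bot, by simp⟩
      | tmul x y =>
        refine ⟨Submodule.span k {x}, Submodule.fg_span_singleton x, fun b => ?_⟩
        rw [ctr_tmul]
        exact Submodule.smul_mem _ _ (Submodule.mem_span_singleton_self x)
      | add x y hx hy =>
        obtain ⟨W, hW, hW'⟩ := hx
        obtain ⟨U, hU, hU'⟩ := hy
        refine ⟨W ⊔ U, hW.sup hU, fun b => ?_⟩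
        rw [map_add]
        exact Submodule.add_mem_sup (hW' b) (hU' b)
    obtain ⟨W, hW, hW'⟩ := this (Coalgebra.comul v)
    refine Submodule.FG.of_le hW ?_
    rintro _ ⟨b, rfl⟩
    exact hW' b
  obtain ⟨t, ht⟩ := (Submodule.fg_iff_finiteDimensional V).2 hV
  let N : Submodule k H := ⨆ v ∈ t, LinearMap.range (act v)
  have hN : N.FG := Submodule.fg_biSup t _ fun v _ => hfin v
  have hop : ∀ b c (x : H), opR (Coalgebra.comul (R := k) (A := H)) b (opR (Coalgebra.comul (R := k) (A := H)) c x)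
      = opR (Coalgebra.comul (R := k) (A := H)) (conv b c) x := fun b c x =>
    LinearMap.congr_fun (hR'.1 b c) x
  have hsub : ∀ b, N ≤ N.comap (opR (Coalgebra.comul (R := k) (A := H)) b) := by
    intro b
    refine iSup₂_le fun v hv => ?_
    rintro _ ⟨c, rfl⟩
    refine Submodule.mem_iSup_of_mem v (Submodule.mem_iSup_of_mem hv ?_)
    exact ⟨conv b c, (hop b c v).symm⟩
  have hVN : V ≤ N := by
    rw [← ht, Submodule.span_le]
    intro v hv
    refine Submodule.mem_iSup_of_mem v (Submodule.mem_iSup_of_mem hv ?_)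
    exact ⟨Coalgebra.counit (R := k) (A := H), LinearMap.congr_fun hR'.2 v⟩
  have hNs : R.IsSubcomodule N := (isSubcomodule_iff R N).2 fun b x hx => hsub b hx
  refine ⟨R.sub N hNs, sub_isComodule _ _ _ hR, (Submodule.fg_iff_finiteDimensional N).1 hN, ?_⟩
  intro v hv
  have : coefR (subρ R N hNs) ((Coalgebra.counit (R := k) (A := H)) ∘ₗ N.subtype) ⟨v, hVN hv⟩ = v := by
    have h1 : ∀ x : N ⊗[k] H, ctl ((Coalgebra.counit (R := k) (A := H)) ∘ₗ N.subtype) x =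
        ctl (Coalgebra.counit (R := k) (A := H)) (N.subtype.rTensor H x) := by
      intro x
      induction x using TensorProduct.induction_on with
      | zero => simp
      | tmul x y => simp
      | add x y hx hy => simp [hx, hy]
    have h2 : N.subtype.rTensor H (subρ R N hNs ⟨v, hVN hv⟩) = Coalgebra.comul (R := k) v :=
      (LinearMap.congr_fun (sub_hom R N hNs) ⟨v, hVN hv⟩).symm
    refine (h1 _).trans ?_
    exact (congrArg _ h2).trans (by simp [ctl])
  rw [← this]
  exact coefR_mem _ _ _

end Comod

namespace Comod

variable {k : Type} [Field k] {H : Type} [Ring H] [HopfAlgebra k H]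

/-- the algebra of operators on a comodule -/
noncomputable def opAlg (M : Comod k H) (hM : M.IsComodule) : Subalgebra k (Module.End k M.X) where
  carrier := Set.range M.op
  mul_mem' := by
    rintro _ _ ⟨b, rfl⟩ ⟨c, rfl⟩
    exact ⟨conv b c, (((isComodule_iff M).1 hM).1 b c).symm⟩
  add_mem' := by
    rintro _ _ ⟨b, rfl⟩ ⟨c, rfl⟩
    exact ⟨b + c, map_add _ _ _⟩
  algebraMap_mem' c := by
    refine ⟨c • Coalgebra.counit (R := k) (A := H), ?_⟩
    rw [map_smul, ((isComodule_iff M).1 hM).2]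
    rfl

theorem opAlg_semisimple (hcs : IsCosemisimple k H) (M : Comod k H) (hM : M.IsComodule) :
    IsSemisimpleModule (M.opAlg hM) M.X := by
  have hsub : ∀ N : Submodule (M.opAlg hM) M.X, M.IsSubcomodule (N.restrictScalars k) := by
    intro N
    rw [isSubcomodule_iff]
    intro b x hx
    exact N.smul_mem (⟨M.op b, ⟨b, rfl⟩⟩ : M.opAlg hM) hx
  refine (isSemisimpleModule_iff _ _).2 ⟨fun N => ?_⟩
  obtain ⟨N', hN', hc⟩ := hcs M hM _ (hsub N)
  rw [isSubcomodule_iff] at hN'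
  refine ⟨{ N' with smul_mem' := ?_ }, ?_⟩
  · rintro ⟨_, b, rfl⟩ x hx
    exact hN' b x hx
  · rw [isCompl_iff, disjoint_iff, codisjoint_iff] at hc ⊢
    constructor
    · rw [eq_bot_iff]
      rintro x ⟨h1, h2⟩
      have : x ∈ N.restrictScalars k ⊓ N' := ⟨h1, h2⟩
      rw [hc.1] at this
      exact this
    · rw [eq_top_iff]
      rintro x -
      have : x ∈ N.restrictScalars k ⊔ N' := by rw [hc.2]; trivial
      obtain ⟨y, hy, z, hz, rfl⟩ := Submodule.mem_sup.1 this
      exact Submodule.add_mem_sup hy hz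

theorem density (hcs : IsCosemisimple k H) (M : Comod k H) (hM : M.IsComodule)
    [FiniteDimensional k M.X] (e : Module.End k M.X)
    (he : ∀ g : M.X →ₗ[k] M.X, IsHom M M g → ∀ x, e (g x) = g (e x)) : ∃ b, M.op b = e := by
  classical
  have := opAlg_semisimple hcs M hM
  let F : Module.End (Module.End (M.opAlg hM) M.X) M.X :=
    { toFun := e
      map_add' := map_add e
      map_smul' := by
        intro g x
        refine he (g.restrictScalars k) ?_ x
        rw [isHom_iff]
        intro b m
        exact (g.map_smul (⟨M.op b, ⟨b, rfl⟩⟩ : M.opAlg hM) m).symm }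
  let B := Module.finBasis k M.X
  obtain ⟨⟨_, b, rfl⟩, hr⟩ := jacobson_density F (Finset.univ.image B)
  refine ⟨b, B.ext fun i => ?_⟩
  exact (hr (B i) (by simp)).symm

theorem simple_op_surj [IsAlgClosed k] (hcs : IsCosemisimple k H) (S : Comod k H) (hS : S.IsSimple) :
    Function.Surjective S.op := by
  obtain ⟨hM, hn, hfd, hs⟩ := hS
  intro e
  refine density hcs S hM e fun g hg x => ?_
  rw [isHom_iff] at hg
  obtain ⟨μ, hμ⟩ := Module.End.exists_eigenvalue g
  have hsub : S.IsSubcomodule (Module.End.eigenspace g μ) := by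
    rw [isSubcomodule_iff]
    intro b x hx
    rw [Module.End.mem_eigenspace_iff] at *
    rw [← hg, hx, map_smul]
  have htop := (hs _ hsub).resolve_left hμ
  have key : ∀ x, g x = μ • x := by
    intro x
    rw [← Module.End.mem_eigenspace_iff, htop]
    trivial
  rw [key, key, map_smul]

theorem simple_finrank_cf [IsAlgClosed k] (hcs : IsCosemisimple k H) (S : Comod k H) (hS : S.IsSimple) :
    Module.finrank k S.cf = Module.finrank k S.X * Module.finrank k S.X := by
  have := hS.2.2.1
  rw [finrank_cf, LinearMap.range_eq_top.2 (simple_op_surj hcs S hS), finrank_top]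
  exact Module.finrank_linearMap k k _ _

theorem iso_of_hom (S T M : Comod k H) (i : S.X →ₗ[k] M.X) (j : T.X →ₗ[k] M.X)
    (hi : IsHom S M i) (hj : IsHom T M j) (hii : Function.Injective i) (hji : Function.Injective j)
    (hc : IsCompl (LinearMap.range i) (LinearMap.range j)) : Iso (S.dsum T) M := by
  have hb : Function.Bijective (i.coprod j) := by
    constructor
    · rw [← LinearMap.ker_eq_bot, LinearMap.ker_coprod_of_disjoint_range _ _ hc.1,
        LinearMap.ker_eq_bot.2 hii, LinearMap.ker_eq_bot.2 hji, Submodule.prod_bot]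
    · rw [← LinearMap.range_eq_top, LinearMap.range_coprod]
      exact hc.sup_eq_top
  rw [isHom_iff] at hi hj
  refine ⟨LinearEquiv.ofBijective (i.coprod j) hb, ?_⟩
  refine (isHom_iff _ _ _).2 fun b m => ?_
  have h : ∀ m : S.X × T.X, M.op b (i.coprod j m) = i.coprod j (opR (dsumρ S T) b m) := by
    intro m
    rw [dsum_op, LinearMap.coprod_apply, LinearMap.coprod_apply, map_add, hi, hj]
  exact h m

theorem iso_split (M : Comod k H) (P Q : Submodule k M.X) (hP : M.IsSubcomodule P)
    (hQ : M.IsSubcomodule Q) (hc : IsCompl P Q) : Iso ((M.sub P hP).dsum (M.sub Q hQ)) M := by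
  refine iso_of_hom (M.sub P hP) (M.sub Q hQ) M P.subtype Q.subtype (sub_hom M P hP) (sub_hom M Q hQ)
    P.subtype_injective Q.subtype_injective ?_
  have h1 : LinearMap.range P.subtype = P := Submodule.range_subtype P
  have h2 : LinearMap.range Q.subtype = Q := Submodule.range_subtype Q
  have h : IsCompl (LinearMap.range P.subtype) (LinearMap.range Q.subtype) := by rwa [h1, h2]
  exact h

theorem ker_sub (M N : Comod k H) (f : M.X →ₗ[k] N.X) (hf : IsHom M N f) :
    M.IsSubcomodule (LinearMap.ker f) := by
  rw [isHom_iff] at hf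
  rw [isSubcomodule_iff]
  intro b x hx
  rw [LinearMap.mem_ker] at *
  rw [← hf, hx, map_zero]

theorem range_sub (M N : Comod k H) (f : M.X →ₗ[k] N.X) (hf : IsHom M N f) :
    N.IsSubcomodule (LinearMap.range f) := by
  rw [isHom_iff] at hf
  rw [isSubcomodule_iff]
  rintro b _ ⟨x, rfl⟩
  exact ⟨M.op b x, (hf b x).symm⟩

/-- `S` splits off `N` -/
def Splits (S N : Comod k H) : Prop :=
  ∃ T : Comod k H, T.IsComodule ∧ FiniteDimensional k T.X ∧ Iso (S.dsum T) N

theorem hom_zero_left (hcs : IsCosemisimple k H) (S N : Comod k H) (hS : S.IsSimple)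
    (hN : N.IsComodule) [FiniteDimensional k N.X] (hno : ¬ Splits S N) (h : S.X →ₗ[k] N.X)
    (hh : IsHom S N h) : h = 0 := by
  rcases hS.2.2.2 _ (ker_sub S N h hh) with h0 | h0
  · exfalso
    apply hno
    obtain ⟨C, hC, hc⟩ := hcs N hN _ (range_sub S N h hh)
    refine ⟨N.sub C hC, sub_isComodule _ _ _ hN, inferInstanceAs (FiniteDimensional k C), ?_⟩
    refine iso_of_hom S (N.sub C hC) N h C.subtype hh (sub_hom N C hC) (LinearMap.ker_eq_bot.1 h0)
      C.subtype_injective ?_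
    have h2 : LinearMap.range C.subtype = C := Submodule.range_subtype C
    have h : IsCompl (LinearMap.range h) (LinearMap.range C.subtype) := by rwa [h2]
    exact h
  · exact LinearMap.ker_eq_top.1 h0

theorem hom_zero_right (hcs : IsCosemisimple k H) (S N : Comod k H) (hS : S.IsSimple)
    (hN : N.IsComodule) [FiniteDimensional k N.X] (hno : ¬ Splits S N) (h : N.X →ₗ[k] S.X)
    (hh : IsHom N S h) : h = 0 := by
  rcases hS.2.2.2 _ (range_sub N S h hh) with h0 | h0
  · exact LinearMap.range_eq_bot.1 h0
  · exfalso
    obtain ⟨C, hC, hc⟩ := hcs N hN _ (ker_sub N S h hh)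
    have hinj : ∀ x ∈ C, ∀ y ∈ C, h x = h y → x = y := by
      intro x hx y hy hxy
      have : x - y ∈ LinearMap.ker h ⊓ C :=
        ⟨by rw [SetLike.mem_coe, LinearMap.mem_ker, map_sub, hxy, sub_self], C.sub_mem hx hy⟩
      rw [hc.inf_eq_bot, Submodule.mem_bot, sub_eq_zero] at this
      exact this
    have hb : Function.Bijective (h.domRestrict C) := by
      constructor
      · rintro ⟨x, hx⟩ ⟨y, hy⟩ hxy
        exact Subtype.ext (hinj x hx y hy hxy)
      · intro s
        obtain ⟨n, rfl⟩ := LinearMap.range_eq_top.1 h0 s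
        have : n ∈ LinearMap.ker h ⊔ C := by rw [hc.sup_eq_top]; trivial
        obtain ⟨y, hy, z, hz, rfl⟩ := Submodule.mem_sup.1 this
        rw [LinearMap.mem_ker] at hy
        exact ⟨⟨z, hz⟩, by simp [hy]⟩
    let E := LinearEquiv.ofBijective _ hb
    let g : S.X →ₗ[k] N.X := C.subtype ∘ₗ E.symm.toLinearMap
    have hg : ∀ s, h (g s) = s := fun s => E.apply_symm_apply s
    have hgC : ∀ s, g s ∈ C := fun s => (E.symm s).2
    have hgh : IsHom S N g := by
      rw [isHom_iff]
      intro b s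
      refine hinj _ ((isSubcomodule_iff _ _).1 hC b _ (hgC s)) _ (hgC _) ?_
      rw [hg, ← (isHom_iff _ _ _).1 hh, hg]
    have h00 := hom_zero_left hcs S N hS hN hno g hgh
    have := hS.2.1
    obtain ⟨s, hs⟩ := exists_ne (0 : S.X)
    apply hs
    rw [← hg s, h00]
    simp

theorem cf_disjoint (hcs : IsCosemisimple k H) (S N : Comod k H) (hS : S.IsSimple)
    (hN : N.IsComodule) [FiniteDimensional k N.X] (hno : ¬ Splits S N) : S.cf ⊓ N.cf = ⊥ := by
  have hSfd := hS.2.2.1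
  have hfd : FiniteDimensional k (S.dsum N).X := inferInstanceAs (FiniteDimensional k (S.X × N.X))
  let e : Module.End k (S.X × N.X) := LinearMap.inl k S.X N.X ∘ₗ LinearMap.fst k S.X N.X
  obtain ⟨b, hb⟩ : ∃ b, opR (dsumρ S N) b = e := by
    refine density hcs (S.dsum N) (dsum_isComodule _ _ hS.1 hN) e ?_
    intro g hg
    have hg' : ∀ b (m : S.X × N.X), opR (dsumρ S N) b ((g : S.X × N.X →ₗ[k] S.X × N.X) m) =
        (g : S.X × N.X →ₗ[k] S.X × N.X) (opR (dsumρ S N) b m) := (isHom_iff _ _ _).1 hg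
    clear hg
    revert g
    change ∀ g : S.X × N.X →ₗ[k] S.X × N.X, (∀ b (m : S.X × N.X), opR (dsumρ S N) b (g m) =
        g (opR (dsumρ S N) b m)) → ∀ x : S.X × N.X, e (g x) = g (e x)
    intro g hg
    have h1 : LinearMap.snd k S.X N.X ∘ₗ g ∘ₗ LinearMap.inl k S.X N.X = 0 := by
      refine hom_zero_left hcs S N hS hN hno _ ((isHom_iff _ _ _).2 fun b m => ?_)
      have := hg b (m, 0)
      rw [dsum_op, dsum_op] at this
      simpa using congrArg Prod.snd this
    have h2 : LinearMap.fst k S.X N.X ∘ₗ g ∘ₗ LinearMap.inr k S.X N.X = 0 := by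
      refine hom_zero_right hcs S N hS hN hno _ ((isHom_iff _ _ _).2 fun b m => ?_)
      have := hg b (0, m)
      rw [dsum_op, dsum_op] at this
      simpa using congrArg Prod.fst this
    rintro ⟨x, y⟩
    have h1x : (g (x, 0)).2 = 0 := LinearMap.congr_fun h1 x
    have h2y : (g (0, y)).1 = 0 := LinearMap.congr_fun h2 y
    have hxy : g (x, y) = g (x, 0) + g (0, y) := by rw [← map_add]; simp
    have he : ∀ z, e z = (z.1, 0) := fun z => rfl
    rw [he, he, hxy]
    refine Prod.ext ?_ ?_
    · simp [h2y]
    · simp [h1x]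
  have hS1 : ∀ s, S.op b s = s := by
    intro s
    have := (dsum_op S N b (s, 0)).symm
    rw [hb] at this
    exact congrArg Prod.fst this
  have hN0 : ∀ n, N.op b n = 0 := by
    intro s
    have := (dsum_op S N b (0, s)).symm
    rw [hb] at this
    exact congrArg Prod.snd this
  rw [eq_bot_iff]
  rintro x ⟨hxS, hxN⟩
  rw [Submodule.mem_bot, ← Module.forall_dual_apply_eq_zero_iff k]
  intro c
  have e1 : (conv b c - c) x = 0 := by
    refine (op_eq_zero_iff S _).1 ?_ x hxS
    rw [map_sub, ← ((isComodule_iff S).1 hS.1).1]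
    ext m
    simp [hS1]
  have e2 : conv b c x = 0 := by
    refine (op_eq_zero_iff N _).1 ?_ x hxN
    rw [← ((isComodule_iff N).1 hN).1]
    ext m
    simp [hN0]
  rw [LinearMap.sub_apply, e2, zero_sub, neg_eq_zero] at e1
  exact e1

theorem inl_hom (M N : Comod k H) : IsHom M (M.dsum N) (LinearMap.inl k M.X N.X) := by
  refine (isHom_iff _ _ _).2 fun b m => ?_
  refine (dsum_op M N b _).trans ?_
  exact Prod.ext rfl (map_zero (N.op b))

theorem inr_hom (M N : Comod k H) : IsHom N (M.dsum N) (LinearMap.inr k M.X N.X) := by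
  refine (isHom_iff _ _ _).2 fun b m => ?_
  refine (dsum_op M N b _).trans ?_
  exact Prod.ext (map_zero (M.op b)) rfl

theorem hom_comp (M N P : Comod k H) (f : M.X →ₗ[k] N.X) (g : N.X →ₗ[k] P.X) (hf : IsHom M N f)
    (hg : IsHom N P g) : IsHom M P (g ∘ₗ f) := by
  rw [isHom_iff] at *
  intro b m
  rw [LinearMap.comp_apply, LinearMap.comp_apply, hg, hf]

theorem simple_dsum (S S1 S2 : Comod k H) (hS : S.IsSimple) (h : Iso (S1.dsum S2) S) :
    Iso S1 S ∨ Iso S2 S := by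
  obtain ⟨e, he⟩ := h
  let i : S1.X →ₗ[k] S.X := (e.toLinearMap : S1.X × S2.X →ₗ[k] S.X) ∘ₗ LinearMap.inl k S1.X S2.X
  let j : S2.X →ₗ[k] S.X := (e.toLinearMap : S1.X × S2.X →ₗ[k] S.X) ∘ₗ LinearMap.inr k S1.X S2.X
  have hi : IsHom S1 S i := hom_comp S1 (S1.dsum S2) S _ _ (inl_hom _ _) he
  have hj : IsHom S2 S j := hom_comp S2 (S1.dsum S2) S _ _ (inr_hom _ _) he
  have hii : Function.Injective i := e.injective.comp LinearMap.inl_injective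
  have hji : Function.Injective j := e.injective.comp LinearMap.inr_injective
  have hij : ∀ s, ∃ x y, s = i x + j y := by
    intro s
    obtain ⟨⟨x, y⟩, rfl⟩ := e.surjective s
    refine ⟨x, y, ?_⟩
    have : ∀ E : S1.X × S2.X →ₗ[k] S.X, E (x, y) = E (x, 0) + E (0, y) := by
      intro E
      rw [← map_add]; simp
    exact this _
  rcases hS.2.2.2 _ (range_sub S1 S i hi) with h0 | h0
  · right
    refine ⟨LinearEquiv.ofBijective j ⟨hji, fun s => ?_⟩, hj⟩
    obtain ⟨x, y, rfl⟩ := hij s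
    refine ⟨y, ?_⟩
    rw [LinearMap.range_eq_bot.1 h0]
    simp
  · left
    exact ⟨LinearEquiv.ofBijective i ⟨hii, LinearMap.range_eq_top.1 h0⟩, hi⟩

theorem exists_simple_sub (M : Comod k H) (hM : M.IsComodule) [FiniteDimensional k M.X]
    [Nontrivial M.X] : ∃ (P : Submodule k M.X) (hP : M.IsSubcomodule P), (M.sub P hP).IsSimple := by
  have hne : {P : Submodule k M.X | M.IsSubcomodule P ∧ P ≠ ⊥}.Nonempty :=
    ⟨⊤, (isSubcomodule_iff _ _).2 fun _ _ _ => trivial, top_ne_bot⟩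
  obtain ⟨P, ⟨hP, hP0⟩, hmin⟩ := wellFounded_lt.has_min _ hne
  refine ⟨P, hP, sub_isComodule _ _ _ hM, Submodule.nontrivial_iff_ne_bot.2 hP0,
    inferInstanceAs (FiniteDimensional k P), ?_⟩
  change ∀ N : Submodule k P, (M.sub P hP).IsSubcomodule N → N = ⊥ ∨ N = ⊤
  intro N hN
  have hN' : ∀ b, ∀ x ∈ N, opR (subρ M P hP) b x ∈ N := (isSubcomodule_iff _ _).1 hN
  have hmap : M.IsSubcomodule (N.map P.subtype) := by
    rw [isSubcomodule_iff]
    rintro b _ ⟨x, hx, rfl⟩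
    exact ⟨opR (subρ M P hP) b x, hN' b x hx, sub_op M P hP b x⟩
  by_cases hN0 : N = ⊥
  · exact Or.inl hN0
  · right
    have h1 : ¬ N.map P.subtype < P := by
      refine hmin _ ⟨hmap, fun h => hN0 ?_⟩
      apply Submodule.map_injective_of_injective P.subtype_injective
      rw [h, Submodule.map_bot]
    have h2 : N.map P.subtype = P := by
      by_contra h
      exact h1 (lt_of_le_of_ne (Submodule.map_subtype_le P N) h)
    apply Submodule.map_injective_of_injective P.subtype_injective
    rw [h2, Submodule.map_subtype_top]

end Comod

namespace Comod

section transfer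

variable {k : Type} [Field k] {H : Type} [Ring H] [HopfAlgebra k H]
  {A : Type} [Ring A] [HopfAlgebra k A]

theorem Iso.finrank_eq {M N : Comod k H} (h : Iso M N) :
    Module.finrank k M.X = Module.finrank k N.X := by
  obtain ⟨e, -⟩ := h
  exact e.finrank_eq

theorem dsum_fd (M N : Comod k H) [FiniteDimensional k M.X] [FiniteDimensional k N.X] :
    FiniteDimensional k (M.dsum N).X := inferInstanceAs (FiniteDimensional k (M.X × N.X))

theorem dsum_finrank (M N : Comod k H) [FiniteDimensional k M.X] [FiniteDimensional k N.X] :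
    Module.finrank k (M.dsum N).X = Module.finrank k M.X + Module.finrank k N.X :=
  Module.finrank_prod (R := k) (M := M.X) (M' := N.X)

theorem cls_of_iso_dsum (G : GrSemiring k H) (S T N : Comod k H) (hS : S.IsComodule) (hT : T.IsComodule)
    (hN : N.IsComodule) [FiniteDimensional k S.X] [FiniteDimensional k T.X] [FiniteDimensional k N.X]
    (h : Iso (S.dsum T) N) : G.cls N = G.cls S + G.cls T := by
  rw [← G.cls_dsum S T hS hT inferInstance inferInstance]
  exact (G.cls_iso _ _ (dsum_isComodule _ _ hS hT) hN (dsum_fd S T) inferInstance h).symm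

theorem iso_dsum_of_cls (G : GrSemiring k H) (S T N : Comod k H) (hS : S.IsComodule) (hT : T.IsComodule)
    (hN : N.IsComodule) [FiniteDimensional k S.X] [FiniteDimensional k T.X] [FiniteDimensional k N.X]
    (h : G.cls N = G.cls S + G.cls T) : Iso (S.dsum T) N := by
  rw [← G.cls_dsum S T hS hT inferInstance inferInstance] at h
  exact G.cls_inj _ _ (dsum_isComodule _ _ hS hT) hN (dsum_fd S T) inferInstance h.symm

theorem splits_transfer (GH : GrSemiring k H) (GA : GrSemiring k A) (f : GH.R ≃+* GA.R)
    (S N : Comod k H) (S' N' : Comod k A) (hS : S.IsComodule) (hN : N.IsComodule)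
    (hS' : S'.IsComodule) (hN' : N'.IsComodule) [FiniteDimensional k S.X] [FiniteDimensional k N.X]
    [FiniteDimensional k S'.X] [FiniteDimensional k N'.X] (h1 : GA.cls S' = f (GH.cls S))
    (h2 : GA.cls N' = f (GH.cls N)) (h : Splits S N) : Splits S' N' := by
  obtain ⟨T, hT, hTfd, hiso⟩ := h
  obtain ⟨T', hT', hTfd', hcls⟩ := GA.cls_surj (f (GH.cls T))
  refine ⟨T', hT', hTfd', iso_dsum_of_cls GA S' T' N' hS' hT' hN' ?_⟩
  rw [h1, h2, hcls, cls_of_iso_dsum GH S T N hS hT hN hiso, map_add]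

theorem splits_cf_le (S N : Comod k H) (h : Splits S N) : S.cf ≤ N.cf := by
  obtain ⟨T, hT, hTfd, hiso⟩ := h
  rw [← hiso.cf_eq, dsum_cf]
  exact le_sup_left

theorem finrank_cf_zero (M : Comod k H) [FiniteDimensional k M.X] (h : Module.finrank k M.X = 0) :
    Module.finrank k M.cf = 0 := by
  rw [finrank_cf]
  have : Subsingleton M.X := Module.finrank_zero_iff.1 h
  have : LinearMap.range M.op = ⊥ := by
    rw [eq_bot_iff]
    rintro x -
    rw [Submodule.mem_bot]
    exact LinearMap.ext fun m => Subsingleton.elim _ _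
  rw [this, finrank_bot]

theorem simple_transfer (hA : IsCosemisimple k A)
    (GH : GrSemiring k H) (GA : GrSemiring k A) (f : GH.R ≃+* GA.R)
    (hf : ∀ M : Comod k H, M.IsSimple →
            ∀ M' : Comod k A, M'.IsComodule → FiniteDimensional k M'.X →
              GA.cls M' = f (GH.cls M) →
                Module.finrank k M'.X = Module.finrank k M.X)
    (S : Comod k H) (hS : S.IsSimple) (S' : Comod k A) (hS' : S'.IsComodule)
    [hfd : FiniteDimensional k S'.X] (h : GA.cls S' = f (GH.cls S)) : S'.IsSimple := by
  have hSfd := hS.2.2.1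
  have hnt := hS.2.1
  have hdim := hf S hS S' hS' hfd h
  refine ⟨hS', ?_, hfd, ?_⟩
  · have : 0 < Module.finrank k S.X := Module.finrank_pos
    rw [← hdim] at this
    exact Module.nontrivial_of_finrank_pos this
  · intro P hP
    obtain ⟨Q, hQ, hc⟩ := hA S' hS' P hP
    have hPfd : FiniteDimensional k (S'.sub P hP).X := inferInstanceAs (FiniteDimensional k P)
    have hQfd : FiniteDimensional k (S'.sub Q hQ).X := inferInstanceAs (FiniteDimensional k Q)
    have hPc := sub_isComodule S' P hP hS'
    have hQc := sub_isComodule S' Q hQ hS'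
    have hcls := cls_of_iso_dsum GA _ _ S' hPc hQc hS' (iso_split S' P Q hP hQ hc)
    obtain ⟨S1, hS1, hS1fd, hc1⟩ := GH.cls_surj (f.symm (GA.cls (S'.sub P hP)))
    obtain ⟨S2, hS2, hS2fd, hc2⟩ := GH.cls_surj (f.symm (GA.cls (S'.sub Q hQ)))
    have hiso : Iso (S1.dsum S2) S := by
      refine iso_dsum_of_cls GH S1 S2 S hS1 hS2 hS.1 ?_
      rw [hc1, hc2, ← map_add, ← hcls, h, RingEquiv.symm_apply_apply]
    have hsum : Module.finrank k P + Module.finrank k Q = Module.finrank k S'.X :=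
      Submodule.finrank_add_eq_of_isCompl hc
    rcases simple_dsum S S1 S2 hS hiso with h1 | h2
    · right
      have e := GH.cls_iso _ _ hS1 hS.1 hS1fd hSfd h1
      have e' := hf S hS (S'.sub P hP) hPc hPfd (by rw [← e, hc1, RingEquiv.apply_symm_apply])
      apply Submodule.eq_top_of_finrank_eq
      exact e'.trans hdim.symm
    · left
      have e := GH.cls_iso _ _ hS2 hS.1 hS2fd hSfd h2
      have e' : Module.finrank k Q = _ :=
        hf S hS (S'.sub Q hQ) hQc hQfd (by rw [← e, hc2, RingEquiv.apply_symm_apply])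
      apply Submodule.finrank_eq_zero.1
      omega

theorem main_transfer [IsAlgClosed k] (hH : IsCosemisimple k H) (hA : IsCosemisimple k A)
    (GH : GrSemiring k H) (GA : GrSemiring k A) (f : GH.R ≃+* GA.R)
    (hf : ∀ M : Comod k H, M.IsSimple →
            ∀ M' : Comod k A, M'.IsComodule → FiniteDimensional k M'.X →
              GA.cls M' = f (GH.cls M) →
                Module.finrank k M'.X = Module.finrank k M.X) :
    ∀ (n : ℕ) (M : Comod k H) (M' : Comod k A), M.IsComodule → M'.IsComodule →
      FiniteDimensional k M.X → FiniteDimensional k M'.X → GA.cls M' = f (GH.cls M) →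
      Module.finrank k M.X = n → 
      Module.finrank k M'.cf = Module.finrank k M.cf := by
  intro n
  induction n using Nat.strong_induction_on with
  | _ n ih =>
  intro M M' hM hM' hMfd hMfd' hcls hn
  rcases Nat.eq_zero_or_pos n with h0 | hpos
  · have hz : Module.finrank k M.X = 0 := hn.trans h0
    rw [finrank_cf_zero M hz]
    apply finrank_cf_zero
    have : Subsingleton M.X := Module.finrank_zero_iff.1 hz
    have hiso : Iso (M.dsum M) M := by
      refine iso_of_hom M M M LinearMap.id LinearMap.id ?_ ?_ (fun _ _ h => h) (fun _ _ h => h) ?_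
      · exact (isHom_iff _ _ _).2 fun b m => rfl
      · exact (isHom_iff _ _ _).2 fun b m => rfl
      · have : ∀ P Q : Submodule k M.X, IsCompl P Q := fun P Q => by
          rw [Subsingleton.elim P ⊥, Subsingleton.elim Q ⊤]
          exact isCompl_bot_top
        exact this _ _
    have h1 := cls_of_iso_dsum GH M M M hM hM hM hiso
    have h2 : Iso (M'.dsum M') M' := by
      refine iso_dsum_of_cls GA M' M' M' hM' hM' hM' ?_
      rw [hcls, ← map_add, ← h1]
    have h3 := h2.finrank_eq
    rw [dsum_finrank] at h3
    omega
  · have : Nontrivial M.X := Module.nontrivial_of_finrank_pos (R := k) (by omega)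
    obtain ⟨P, hP, hS⟩ := exists_simple_sub M hM
    obtain ⟨Q, hQ, hc⟩ := hH M hM P hP
    have hiso := iso_split M P Q hP hQ hc
    have hNfd : FiniteDimensional k (M.sub Q hQ).X := inferInstanceAs (FiniteDimensional k Q)
    have hN := sub_isComodule M Q hQ hM
    generalize M.sub P hP = S at *
    generalize M.sub Q hQ = N at *
    have hSfd := hS.2.2.1
    have hSnt := hS.2.1
    have hSpos : 0 < Module.finrank k S.X := Module.finrank_pos
    obtain ⟨S', hS', hSfd', hc1⟩ := GA.cls_surj (f (GH.cls S))
    obtain ⟨N', hN', hNfd', hc2⟩ := GA.cls_surj (f (GH.cls N))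
    have hiso' : Iso (S'.dsum N') M' := by
      refine iso_dsum_of_cls GA S' N' M' hS' hN' hM' ?_
      rw [hcls, hc1, hc2, ← map_add, cls_of_iso_dsum GH S N M hS.1 hN hM hiso]
    have hSs' : S'.IsSimple := simple_transfer hA GH GA f hf S hS S' hS' hc1
    have hd := hiso.finrank_eq
    rw [dsum_finrank] at hd
    have hrec := ih (Module.finrank k N.X) (by omega) N N' hN hN' hNfd hNfd' hc2 rfl
    have hdS := hf S hS S' hS' hSfd' hc1
    have f1 := cf_fd S
    have f2 := cf_fd N
    have f3 := cf_fd S'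
    have f4 := cf_fd N'
    rw [← hiso.cf_eq, ← hiso'.cf_eq, dsum_cf, dsum_cf]
    by_cases hsp : Splits S N
    · have hsp' : Splits S' N' := splits_transfer GH GA f S N S' N' hS.1 hN hS' hN' hc1 hc2 hsp
      rw [sup_eq_right.2 (splits_cf_le S N hsp), sup_eq_right.2 (splits_cf_le S' N' hsp'), hrec]
    · have hsp' : ¬ Splits S' N' := fun h => hsp <|
        splits_transfer GA GH f.symm S' N' S N hS' hN' hS.1 hN (by rw [hc1]; simp) (by rw [hc2]; simp) h
      have e1 := Submodule.finrank_sup_add_finrank_inf_eq S.cf N.cf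
      have e2 := Submodule.finrank_sup_add_finrank_inf_eq S'.cf N'.cf
      rw [cf_disjoint hH S N hS hN hsp, finrank_bot, simple_finrank_cf hH S hS] at e1
      rw [cf_disjoint hA S' N' hSs' hN' hsp', finrank_bot, simple_finrank_cf hA S' hSs', hdS] at e2
      omega

theorem cls_pw (G : GrSemiring k H) (M : Comod k H) (hM : M.IsComodule) [FiniteDimensional k M.X] :
    ∀ n, G.cls (M.pw n) = G.cls M ^ n
  | 0 => by rw [pow_zero]; exact G.cls_one
  | n + 1 => by
    rw [pow_succ, ← cls_pw G M hM n]
    exact G.cls_tensor _ _ (pw_isComodule M hM n) hM (pw_fd M n) inferInstance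

theorem pow_finrank [IsAlgClosed k] (hH : IsCosemisimple k H) (hA : IsCosemisimple k A)
    (GH : GrSemiring k H) (GA : GrSemiring k A) (f : GH.R ≃+* GA.R)
    (hf : ∀ M : Comod k H, M.IsSimple →
            ∀ M' : Comod k A, M'.IsComodule → FiniteDimensional k M'.X →
              GA.cls M' = f (GH.cls M) →
                Module.finrank k M'.X = Module.finrank k M.X)
    (M : Comod k H) (M' : Comod k A) (hM : M.IsComodule) (hM' : M'.IsComodule)
      [FiniteDimensional k M.X] [FiniteDimensional k M'.X] (h : GA.cls M' = f (GH.cls M)) (n : ℕ) :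
      Module.finrank k ↥(M'.cf ^ n) = Module.finrank k ↥(M.cf ^ n) := by
  rw [← pw_cf, ← pw_cf]
  refine main_transfer hH hA GH GA f hf _ (M.pw n) (M'.pw n) (pw_isComodule M hM n)
    (pw_isComodule M' hM' n) (pw_fd M n) (pw_fd M' n) ?_ rfl
  rw [cls_pw GA M' hM', cls_pw GH M hM, h, map_pow]

theorem GK_le_of (h : ∀ M : Comod k H, M.IsComodule → FiniteDimensional k M.X →
    ∃ M' : Comod k A, FiniteDimensional k M'.X ∧
      ∀ n, Module.finrank k ↥(M'.cf ^ n) = Module.finrank k ↥(M.cf ^ n)) :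
    GKdim k H ≤ GKdim k A := by
  unfold GKdim
  refine iSup₂_le fun V hV => ?_
  obtain ⟨M, hM, hMfd, hVM⟩ := exists_cf_ge V
  obtain ⟨M', hMfd', hpow⟩ := h M hM hMfd
  refine le_trans ?_ (le_iSup₂_of_le M'.cf (cf_fd M') le_rfl)
  refine aux_limsup_mono _ _ fun n _ => ?_
  rw [hpow]
  have : FiniteDimensional k ↥(M.cf ^ n) := by
    have := pw_fd M n
    rw [← pw_cf]
    exact cf_fd _
  exact Submodule.finrank_mono (pow_le_pow_left' hVM n)

theorem GK_eq [IsAlgClosed k] (hH : IsCosemisimple k H) (hA : IsCosemisimple k A)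
    (GH : GrSemiring k H) (GA : GrSemiring k A) (f : GH.R ≃+* GA.R)
    (hf : ∀ M : Comod k H, M.IsSimple →
            ∀ M' : Comod k A, M'.IsComodule → FiniteDimensional k M'.X →
              GA.cls M' = f (GH.cls M) →
                Module.finrank k M'.X = Module.finrank k M.X) :
    GKdim k H = GKdim k A := by
  apply le_antisymm
  · refine GK_le_of fun M hM hMfd => ?_
    obtain ⟨M', hM', hMfd', hc⟩ := GA.cls_surj (f (GH.cls M))
    exact ⟨M', hMfd', pow_finrank hH hA GH GA f hf M M' hM hM' hc⟩
  · refine GK_le_of fun M' hM' hMfd' => ?_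
    obtain ⟨M, hM, hMfd, hc⟩ := GH.cls_surj (f.symm (GA.cls M'))
    exact ⟨M, hMfd, fun n => (pow_finrank hH hA GH GA f hf M M' hM hM' (by rw [hc]; simp) n).symm⟩

end transfer

end Comod

/-- Proposition 3.1 of the paper.  Let `k` be algebraically
closed of characteristic `0`, let `G` be a semisimple, connected, simply
connected algebraic group (in particular linearly reductive), presented by its
coordinate Hopf algebra `A = O(G)`, and let `q ∈ k` be a nonzero scalar; if `q`
is a root of unity of order `ℓ` we assume `ℓ` is odd.  The quantized coordinate
ring `H = O_q(G) ⊆ U_q(𝔤)°` is a finitely generated Hopf algebra which: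
* for `q` not a root of unity is cosemisimple and a quantum function algebra on
  `G` (i.e. `(R_+(H), d_H) ≅ (R_+(G), d_G)`), and
* for `q` a root of unity (of odd order) is a finite module over a central
  subalgebra isomorphic to `O(G)`.
Then `GKdim O_q(G) = dim G` (the Krull dimension of `O(G)`). -/
theorem stmt5 (k : Type) [Field k] [IsAlgClosed k] [CharZero k]
    (A : Type) [CommRing A] [HopfAlgebra k A]
    (hred : IsReduced A) (hfgA : Algebra.FiniteType k A)
    (hA : IsCosemisimple k A)
    (H : Type) [Ring H] [HopfAlgebra k H]
    (hfgH : Algebra.FiniteType k H)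
    (q : k) (hq : q ≠ 0)
    (hodd : ∀ ℓ : ℕ, 0 < ℓ → orderOf q = ℓ → Odd ℓ)
    (hgeneric : (¬ ∃ n : ℕ, 0 < n ∧ q ^ n = 1) →
      IsCosemisimple k H ∧
        ∃ (GA : GrSemiring k A) (GH : GrSemiring k H) (f : GH.R ≃+* GA.R),
          ∀ M : Comod k H, M.IsSimple →
            ∀ M' : Comod k A, M'.IsComodule → FiniteDimensional k M'.X →
              GA.cls M' = f (GH.cls M) →
                Module.finrank k M'.X = Module.finrank k M.X)
    (hroot : (∃ n : ℕ, 0 < n ∧ q ^ n = 1) →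
      ∃ φ : A →ₐ[k] H, Function.Injective φ ∧
        (∀ a : A, ∀ h : H, φ a * h = h * φ a) ∧
        ∃ s : Finset H, ∀ h : H,
          h ∈ Submodule.span k {x : H | ∃ a : A, ∃ y ∈ s, x = φ a * y})
    (d : ℕ) (hd : ringKrullDim A = d) :
    GKdim k H = d := by
  by_cases hq1 : ∃ n : ℕ, 0 < n ∧ q ^ n = 1
  · obtain ⟨φ, hφ, hc, s, hs⟩ := hroot hq1
    exact aux_root hfgA d hd φ hφ hc s hs
  · obtain ⟨hH, GA, GH, f, hf⟩ := hgeneric hq1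
    rw [Comod.GK_eq hH hA GH GA f hf]
    refine aux_root hfgA d hd (AlgHom.id k A) (fun _ _ h => h) (fun a b => mul_comm _ _) {1} ?_
    intro h
    refine Submodule.subset_span ⟨h, 1, by simp, by simp⟩
end

section
/- Let H and K be finitely generated cosemisimple Hopf algebras over an algebraically closed field, and suppose there is a semiring isomorphism f : R_+(H) → R_+(K) between their Grothendieck semirings. If there exists a class [X] ∈ R_+(H) with dim X > dim f(X), then GKdim H = ∞. -/
/-!
Background definitions: comodules over a Hopf algebra, simple comodules, direct
summands, supports, subcoalgebras, cosemisimplicity, Gelfand-Kirillov dimension,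
and (measured) Grothendieck semirings of cosemisimple Hopf algebras.
-/

open TensorProduct

section aux
variable {k : Type} [Field k] {H : Type} [Ring H] [HopfAlgebra k H]
variable {M N : Type} [AddCommGroup M] [Module k M] [AddCommGroup N] [Module k N]

/-- unbundled comodule axioms -/
def Coact (ρ : M →ₗ[k] M ⊗[k] H) : Prop :=
  (ρ.rTensor H ∘ₗ ρ =
      (TensorProduct.assoc k M H H).symm.toLinearMap
        ∘ₗ (Coalgebra.comul (R := k) (A := H)).lTensor M ∘ₗ ρ) ∧
  (TensorProduct.rid k M).toLinearMap
      ∘ₗ (Coalgebra.counit (R := k) (A := H)).lTensor M ∘ₗ ρ = LinearMap.id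

/-- support condition -/
def Supp (ρ : M →ₗ[k] M ⊗[k] H) (W : Submodule k H) : Prop :=
  ∀ x, ρ x ∈ LinearMap.range (W.subtype.lTensor M)

/-- the coaction on a tensor product before applying coactions -/
noncomputable def Psi (k H M N : Type) [Field k] [Ring H] [HopfAlgebra k H]
    [AddCommGroup M] [Module k M] [AddCommGroup N] [Module k N] :
    (M ⊗[k] H) ⊗[k] (N ⊗[k] H) →ₗ[k] (M ⊗[k] N) ⊗[k] H :=
  (LinearMap.mul' k H).lTensor (M ⊗[k] N)
        ∘ₗ (TensorProduct.tensorTensorTensorComm k M H N H).toLinearMap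

@[simp] lemma Psi_tmul (m : M) (h : H) (n : N) (g : H) :
    Psi k H M N ((m ⊗ₜ h) ⊗ₜ (n ⊗ₜ g)) = (m ⊗ₜ n) ⊗ₜ (h * g) := by
  simp [Psi]

lemma Supp_tensor {ρ : M →ₗ[k] M ⊗[k] H} {σ : N →ₗ[k] N ⊗[k] H} {W W' : Submodule k H}
    (h : Supp ρ W) (h' : Supp σ W') :
    Supp (Psi k H M N ∘ₗ TensorProduct.map ρ σ) (W * W') := by
  have key : ∀ (u : M ⊗[k] W) (v : N ⊗[k] W'),
      Psi k H M N (W.subtype.lTensor M u ⊗ₜ W'.subtype.lTensor N v) ∈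
        LinearMap.range ((W * W').subtype.lTensor (M ⊗[k] N)) := by
    intro u v
    induction u using TensorProduct.induction_on with
    | zero => simp
    | add a b ha hb => rw [map_add, TensorProduct.add_tmul, map_add]; exact add_mem ha hb
    | tmul m w =>
      induction v using TensorProduct.induction_on with
      | zero => simp
      | add a b ha hb => rw [map_add, TensorProduct.tmul_add, map_add]; exact add_mem ha hb
      | tmul n w' =>
        refine ⟨(m ⊗ₜ n) ⊗ₜ ⟨w.1 * w'.1, Submodule.mul_mem_mul w.2 w'.2⟩, ?_⟩
        simp
  intro x
  induction x using TensorProduct.induction_on with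
  | zero => simp
  | add a b ha hb => rw [map_add]; exact add_mem ha hb
  | tmul m n =>
    obtain ⟨u, hu⟩ := h m
    obtain ⟨v, hv⟩ := h' n
    have := key u v
    rw [hu, hv] at this
    simpa using this

lemma Coact_tensor {ρ : M →ₗ[k] M ⊗[k] H} {σ : N →ₗ[k] N ⊗[k] H}
    (h : Coact ρ) (h' : Coact σ) :
    Coact (Psi k H M N ∘ₗ TensorProduct.map ρ σ) := by
  set T := Psi k H M N ∘ₗ TensorProduct.map ρ σ with hT
  let Psi2 : ((M ⊗[k] H) ⊗[k] H) ⊗[k] ((N ⊗[k] H) ⊗[k] H) →ₗ[k] ((M ⊗[k] N) ⊗[k] H) ⊗[k] H :=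
    (Psi k H M N).rTensor H ∘ₗ Psi k H (M ⊗[k] H) (N ⊗[k] H)
  constructor
  · have e1 : T.rTensor H ∘ₗ Psi k H M N =
        Psi2 ∘ₗ TensorProduct.map (ρ.rTensor H) (σ.rTensor H) := by
      ext m h n g
      simp [Psi2, hT]
    have e2 : (TensorProduct.assoc k (M ⊗[k] N) H H).symm.toLinearMap
        ∘ₗ (Coalgebra.comul (R := k) (A := H)).lTensor (M ⊗[k] N) ∘ₗ Psi k H M N =
        Psi2 ∘ₗ TensorProduct.map ((TensorProduct.assoc k M H H).symm.toLinearMap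
          ∘ₗ (Coalgebra.comul (R := k) (A := H)).lTensor M)
          ((TensorProduct.assoc k N H H).symm.toLinearMap
          ∘ₗ (Coalgebra.comul (R := k) (A := H)).lTensor N) := by
      have key : ∀ (m : M) (n : N) (a b : H ⊗[k] H),
          (TensorProduct.assoc k (M ⊗[k] N) H H).symm ((m ⊗ₜ n) ⊗ₜ (a * b)) =
          Psi2 ((TensorProduct.assoc k M H H).symm (m ⊗ₜ a) ⊗ₜ
            (TensorProduct.assoc k N H H).symm (n ⊗ₜ b)) := by
        intro m n a b
        induction a using TensorProduct.induction_on with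
        | zero => simp
        | add a a' ha ha' =>
          simp only [add_mul, TensorProduct.tmul_add, map_add, TensorProduct.add_tmul, ha, ha']
        | tmul a a' =>
          induction b using TensorProduct.induction_on with
          | zero => simp
          | add a a' ha ha' =>
            simp only [mul_add, TensorProduct.tmul_add, map_add, ha, ha']
          | tmul b b' => simp [Psi2]
      ext m h n g
      simp [key]
    have l : T.rTensor H ∘ₗ T = Psi2 ∘ₗ TensorProduct.map (ρ.rTensor H ∘ₗ ρ) (σ.rTensor H ∘ₗ σ) := by
      calc T.rTensor H ∘ₗ T = (T.rTensor H ∘ₗ Psi k H M N) ∘ₗ TensorProduct.map ρ σ := rfl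
        _ = _ := by rw [e1, TensorProduct.map_comp]; rfl
    rw [l, h.1, h'.1, ← LinearMap.comp_assoc, ← LinearMap.comp_assoc, TensorProduct.map_comp,
      ← LinearMap.comp_assoc, ← e2]
    rfl
  · have e : (TensorProduct.rid k (M ⊗[k] N)).toLinearMap
      ∘ₗ (Coalgebra.counit (R := k) (A := H)).lTensor (M ⊗[k] N) ∘ₗ Psi k H M N =
      TensorProduct.map ((TensorProduct.rid k M).toLinearMap
        ∘ₗ (Coalgebra.counit (R := k) (A := H)).lTensor M)
        ((TensorProduct.rid k N).toLinearMap
        ∘ₗ (Coalgebra.counit (R := k) (A := H)).lTensor N) := by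
      ext m h n g
      simp [TensorProduct.smul_tmul', TensorProduct.tmul_smul, smul_smul, mul_comm]
    have : (TensorProduct.rid k (M ⊗[k] N)).toLinearMap
      ∘ₗ (Coalgebra.counit (R := k) (A := H)).lTensor (M ⊗[k] N) ∘ₗ T =
      ((TensorProduct.rid k (M ⊗[k] N)).toLinearMap
      ∘ₗ (Coalgebra.counit (R := k) (A := H)).lTensor (M ⊗[k] N) ∘ₗ Psi k H M N) ∘ₗ
        TensorProduct.map ρ σ := rfl
    rw [this, e, ← TensorProduct.map_comp, LinearMap.comp_assoc, h.2, LinearMap.comp_assoc, h'.2,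
      TensorProduct.map_id]

/-- coaction on a direct sum -/
noncomputable def Dsum (ρ : M →ₗ[k] M ⊗[k] H) (σ : N →ₗ[k] N ⊗[k] H) :
    M × N →ₗ[k] (M × N) ⊗[k] H :=
  (LinearMap.inl k M N).rTensor H ∘ₗ ρ ∘ₗ LinearMap.fst k M N
     + (LinearMap.inr k M N).rTensor H ∘ₗ σ ∘ₗ LinearMap.snd k M N

/-- coassociativity and counit transport along a comodule map -/
lemma Coact_along {ρ : M →ₗ[k] M ⊗[k] H} {σ : N →ₗ[k] N ⊗[k] H} (h : Coact ρ)
    (i : M →ₗ[k] N) (hi : σ ∘ₗ i = i.rTensor H ∘ₗ ρ) :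
    (σ.rTensor H ∘ₗ σ) ∘ₗ i = ((TensorProduct.assoc k N H H).symm.toLinearMap
        ∘ₗ (Coalgebra.comul (R := k) (A := H)).lTensor N ∘ₗ σ) ∘ₗ i ∧
    ((TensorProduct.rid k N).toLinearMap
      ∘ₗ (Coalgebra.counit (R := k) (A := H)).lTensor N ∘ₗ σ) ∘ₗ i = i := by
  constructor
  · have e : (TensorProduct.assoc k N H H).symm.toLinearMap
        ∘ₗ (Coalgebra.comul (R := k) (A := H)).lTensor N ∘ₗ i.rTensor H
        = (i.rTensor H).rTensor H ∘ₗ (TensorProduct.assoc k M H H).symm.toLinearMap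
        ∘ₗ (Coalgebra.comul (R := k) (A := H)).lTensor M := by
      have key : ∀ (m : M) (a : H ⊗[k] H), (TensorProduct.assoc k N H H).symm (i m ⊗ₜ a) =
        (i.rTensor H).rTensor H ((TensorProduct.assoc k M H H).symm (m ⊗ₜ a)) := by
        intro m a
        induction a using TensorProduct.induction_on with
        | zero => simp
        | add a b ha hb => simp only [TensorProduct.tmul_add, map_add, ha, hb]
        | tmul a b => simp
      ext m h
      simp [key]
    calc (σ.rTensor H ∘ₗ σ) ∘ₗ i = (σ ∘ₗ i).rTensor H ∘ₗ ρ := by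
          rw [LinearMap.rTensor_comp, LinearMap.comp_assoc, LinearMap.comp_assoc, hi]
      _ = (i.rTensor H).rTensor H ∘ₗ (ρ.rTensor H ∘ₗ ρ) := by
          rw [hi, LinearMap.rTensor_comp]; rfl
      _ = ((i.rTensor H).rTensor H ∘ₗ (TensorProduct.assoc k M H H).symm.toLinearMap
        ∘ₗ (Coalgebra.comul (R := k) (A := H)).lTensor M) ∘ₗ ρ := by rw [h.1]; rfl
      _ = _ := by
          rw [← e, LinearMap.comp_assoc, LinearMap.comp_assoc, ← hi]; rfl
  · have e : (TensorProduct.rid k N).toLinearMap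
      ∘ₗ (Coalgebra.counit (R := k) (A := H)).lTensor N ∘ₗ i.rTensor H = i ∘ₗ
       (TensorProduct.rid k M).toLinearMap
      ∘ₗ (Coalgebra.counit (R := k) (A := H)).lTensor M := by
      ext m h
      simp
    calc _ = ((TensorProduct.rid k N).toLinearMap
      ∘ₗ (Coalgebra.counit (R := k) (A := H)).lTensor N ∘ₗ i.rTensor H) ∘ₗ ρ := by
          rw [LinearMap.comp_assoc, LinearMap.comp_assoc, hi]; rfl
      _ = i ∘ₗ ((TensorProduct.rid k M).toLinearMap
      ∘ₗ (Coalgebra.counit (R := k) (A := H)).lTensor M ∘ₗ ρ) := by rw [e]; rfl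
      _ = i := by rw [h.2]; rfl

lemma Coact_dsum {ρ : M →ₗ[k] M ⊗[k] H} {σ : N →ₗ[k] N ⊗[k] H}
    (h : Coact ρ) (h' : Coact σ) : Coact (Dsum ρ σ) := by
  have h1 : Dsum ρ σ ∘ₗ LinearMap.inl k M N = (LinearMap.inl k M N).rTensor H ∘ₗ ρ := by
    ext m; simp [Dsum]
  have h2 : Dsum ρ σ ∘ₗ LinearMap.inr k M N = (LinearMap.inr k M N).rTensor H ∘ₗ σ := by
    ext m; simp [Dsum]
  obtain ⟨a, b⟩ := Coact_along h _ h1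
  obtain ⟨c, d⟩ := Coact_along h' _ h2
  constructor
  · exact LinearMap.prod_ext a c
  · exact LinearMap.prod_ext b d

lemma Coact_sub {ρ : M →ₗ[k] M ⊗[k] H} {σ : N →ₗ[k] N ⊗[k] H} (h : Coact σ)
    (i : M →ₗ[k] N) (hi : σ ∘ₗ i = i.rTensor H ∘ₗ ρ) (hinj : Function.Injective i) :
    Coact ρ := by
  have i1 : Function.Injective (i.rTensor H) := Module.Flat.rTensor_preserves_injective_linearMap i hinj
  have i2 : Function.Injective ((i.rTensor H).rTensor H) :=
    Module.Flat.rTensor_preserves_injective_linearMap _ i1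
  constructor
  · have e : (TensorProduct.assoc k N H H).symm.toLinearMap
        ∘ₗ (Coalgebra.comul (R := k) (A := H)).lTensor N ∘ₗ i.rTensor H
        = (i.rTensor H).rTensor H ∘ₗ (TensorProduct.assoc k M H H).symm.toLinearMap
        ∘ₗ (Coalgebra.comul (R := k) (A := H)).lTensor M := by
      have key : ∀ (m : M) (a : H ⊗[k] H), (TensorProduct.assoc k N H H).symm (i m ⊗ₜ a) =
        (i.rTensor H).rTensor H ((TensorProduct.assoc k M H H).symm (m ⊗ₜ a)) := by
        intro m a
        induction a using TensorProduct.induction_on with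
        | zero => simp
        | add a b ha hb => simp only [TensorProduct.tmul_add, map_add, ha, hb]
        | tmul a b => simp
      ext m h
      simp [key]
    rw [← LinearMap.cancel_left i2]
    calc (i.rTensor H).rTensor H ∘ₗ (ρ.rTensor H ∘ₗ ρ) = (σ ∘ₗ i).rTensor H ∘ₗ ρ := by
          rw [hi, LinearMap.rTensor_comp]; rfl
      _ = (σ.rTensor H ∘ₗ σ) ∘ₗ i := by
          rw [LinearMap.rTensor_comp, LinearMap.comp_assoc, LinearMap.comp_assoc, hi]
      _ = ((TensorProduct.assoc k N H H).symm.toLinearMap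
        ∘ₗ (Coalgebra.comul (R := k) (A := H)).lTensor N ∘ₗ i.rTensor H) ∘ₗ ρ := by
          rw [h.1, LinearMap.comp_assoc, LinearMap.comp_assoc, hi]; rfl
      _ = _ := by rw [e]; rfl
  · have e : (TensorProduct.rid k N).toLinearMap
      ∘ₗ (Coalgebra.counit (R := k) (A := H)).lTensor N ∘ₗ i.rTensor H = i ∘ₗ
       (TensorProduct.rid k M).toLinearMap
      ∘ₗ (Coalgebra.counit (R := k) (A := H)).lTensor M := by
      ext m h
      simp
    rw [← LinearMap.cancel_left hinj]
    calc _ = ((TensorProduct.rid k N).toLinearMap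
      ∘ₗ (Coalgebra.counit (R := k) (A := H)).lTensor N ∘ₗ i.rTensor H) ∘ₗ ρ := by rw [e]; rfl
      _ = ((TensorProduct.rid k N).toLinearMap
      ∘ₗ (Coalgebra.counit (R := k) (A := H)).lTensor N ∘ₗ σ) ∘ₗ i := by
          change _ = (TensorProduct.rid k N).toLinearMap
            ∘ₗ (Coalgebra.counit (R := k) (A := H)).lTensor N ∘ₗ (σ ∘ₗ i)
          rw [hi]; rfl
      _ = _ := by rw [h.2]; rfl

lemma Supp_sub {ρ : M →ₗ[k] M ⊗[k] H} {σ : N →ₗ[k] N ⊗[k] H} {W : Submodule k H} (h : Supp σ W)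
    (i : M →ₗ[k] N) (hi : σ ∘ₗ i = i.rTensor H ∘ₗ ρ) (hinj : Function.Injective i) :
    Supp ρ W := by
  obtain ⟨p, hp⟩ := i.exists_leftInverse_of_injective (LinearMap.ker_eq_bot.2 hinj)
  intro x
  obtain ⟨u, hu⟩ := h (i x)
  refine ⟨p.rTensor W u, ?_⟩
  have e1 : W.subtype.lTensor M (p.rTensor W u) = p.rTensor H (W.subtype.lTensor N u) := by
    simp only [← LinearMap.comp_apply, LinearMap.lTensor_comp_rTensor,
      LinearMap.rTensor_comp_lTensor]
  have e2 : σ (i x) = i.rTensor H (ρ x) := LinearMap.congr_fun hi x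
  rw [e1, hu, e2, ← LinearMap.comp_apply, ← LinearMap.rTensor_comp, hp]
  simp

/-- a simple comodule embeds in its support -/
lemma simple_bound {ρ : M →ₗ[k] M ⊗[k] H} (h : Coact ρ) {W : Submodule k H}
    [FiniteDimensional k W] (hW : Supp ρ W)
    (hs : ∀ A : Submodule k M, (∀ x ∈ A, ρ x ∈ LinearMap.range (A.subtype.rTensor H)) →
      A = ⊥ ∨ A = ⊤) : Module.finrank k M ≤ Module.finrank k W := by
  rcases subsingleton_or_nontrivial M with hM | hM
  · rw [Module.finrank_zero_of_subsingleton]; exact Nat.zero_le _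
  obtain ⟨v, hv⟩ := exists_ne (0 : M)
  obtain ⟨φ, hφ⟩ : ∃ φ : M →ₗ[k] k, φ v ≠ 0 := by
    by_contra! hc
    exact hv ((Module.forall_dual_apply_eq_zero_iff k v).1 hc)
  let g : M →ₗ[k] H := (TensorProduct.lid k H).toLinearMap ∘ₗ φ.rTensor H ∘ₗ ρ
  have hgW : ∀ x, g x ∈ W := by
    intro x
    obtain ⟨u, hu⟩ := hW x
    simp only [g, LinearMap.comp_apply, ← hu]
    clear hu
    induction u using TensorProduct.induction_on with
    | zero => simp
    | add a b ha hb => simp only [map_add]; exact add_mem ha hb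
    | tmul m w => simpa using W.smul_mem _ w.2
  have hg : Coalgebra.comul (R := k) ∘ₗ g = g.rTensor H ∘ₗ ρ := by
    have e : (TensorProduct.lid k H).toLinearMap.rTensor H ∘ₗ (φ.rTensor H).rTensor H ∘ₗ
        (TensorProduct.assoc k M H H).symm.toLinearMap
        ∘ₗ (Coalgebra.comul (R := k) (A := H)).lTensor M =
        Coalgebra.comul (R := k) ∘ₗ (TensorProduct.lid k H).toLinearMap ∘ₗ φ.rTensor H := by
      have key : ∀ (m : M) (a : H ⊗[k] H), (TensorProduct.lid k H).toLinearMap.rTensor H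
         ((φ.rTensor H).rTensor H ((TensorProduct.assoc k M H H).symm (m ⊗ₜ a))) = φ m • a := by
        intro m a
        induction a using TensorProduct.induction_on with
        | zero => simp
        | add a b ha hb => simp only [TensorProduct.tmul_add, map_add, ha, hb, smul_add]
        | tmul a b => simp [TensorProduct.smul_tmul']
      ext m h
      simpa using key m _
    have : g.rTensor H ∘ₗ ρ = (TensorProduct.lid k H).toLinearMap.rTensor H ∘ₗ
        (φ.rTensor H).rTensor H ∘ₗ (ρ.rTensor H ∘ₗ ρ) := by
      simp only [g, LinearMap.rTensor_comp]; rfl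
    rw [this, h.1]
    calc _ = (Coalgebra.comul (R := k) ∘ₗ (TensorProduct.lid k H).toLinearMap ∘ₗ φ.rTensor H) ∘ₗ ρ := rfl
      _ = _ := by rw [← e]; rfl
  have hε : ∀ x, Coalgebra.counit (R := k) (g x) = φ x := by
    intro x
    have e : Coalgebra.counit (R := k) ∘ₗ (TensorProduct.lid k H).toLinearMap ∘ₗ φ.rTensor H =
      φ ∘ₗ (TensorProduct.rid k M).toLinearMap
        ∘ₗ (Coalgebra.counit (R := k) (A := H)).lTensor M := by
      ext m h; simp [mul_comm]
    have h2 := LinearMap.congr_fun h.2 x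
    have h3 := LinearMap.congr_fun e (ρ x)
    simp only [LinearMap.comp_apply, LinearMap.id_apply] at h2 h3
    rw [h2] at h3
    exact h3
  have hker : LinearMap.ker g = ⊥ := by
    have hsub : ∀ x ∈ LinearMap.ker g, ρ x ∈ LinearMap.range ((LinearMap.ker g).subtype.rTensor H) := by
      intro x hx
      have hex : Function.Exact (LinearMap.ker g).subtype g := LinearMap.exact_subtype_ker_map g
      have := Module.Flat.rTensor_exact H hex
      refine (this (ρ x)).1 ?_
      have := LinearMap.congr_fun hg x
      simp only [LinearMap.comp_apply, LinearMap.mem_ker.1 hx, map_zero] at this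
      exact this.symm
    rcases hs (LinearMap.ker g) hsub with h0 | h0
    · exact h0
    · exfalso
      apply hφ
      have : v ∈ LinearMap.ker g := by rw [h0]; trivial
      rw [← hε, LinearMap.mem_ker.1 this, map_zero]
  refine LinearMap.finrank_le_finrank_of_injective (f := g.codRestrict W hgW) ?_
  rw [← LinearMap.ker_eq_bot, LinearMap.ker_codRestrict, hker]

/-- restricted coaction -/
lemma exists_restrict (ρ : M →ₗ[k] M ⊗[k] H) (A : Submodule k M)
    (hA : ∀ x ∈ A, ρ x ∈ LinearMap.range (A.subtype.rTensor H)) :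
    ∃ σ : A →ₗ[k] A ⊗[k] H, ρ ∘ₗ A.subtype = A.subtype.rTensor H ∘ₗ σ := by
  have i1 : Function.Injective (A.subtype.rTensor H) :=
    Module.Flat.rTensor_preserves_injective_linearMap _ A.injective_subtype
  let e := LinearEquiv.ofInjective _ i1
  refine ⟨e.symm.toLinearMap ∘ₗ (ρ ∘ₗ A.subtype).codRestrict _ (fun x => hA x x.2), ?_⟩
  ext x
  have := LinearEquiv.apply_symm_apply e ⟨ρ x, hA x x.2⟩
  have := congrArg Subtype.val this
  simp only [e, LinearEquiv.ofInjective_apply] at this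
  exact this.symm

end aux

section aux2
variable {k : Type} [Field k] {H : Type} [Ring H] [HopfAlgebra k H]

lemma tensor_isComodule {M N : Comod k H} (hM : M.IsComodule) (hN : N.IsComodule) :
    (M.tensor N).IsComodule :=
  Coact_tensor (ρ := M.ρ) (σ := N.ρ) hM hN

lemma dsum_isComodule {M N : Comod k H} (hM : M.IsComodule) (hN : N.IsComodule) :
    (M.dsum N).IsComodule :=
  Coact_dsum (ρ := M.ρ) (σ := N.ρ) hM hN

lemma dsum_fd {M N : Comod k H} (hM : FiniteDimensional k M.X) (hN : FiniteDimensional k N.X) :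
    FiniteDimensional k (M.dsum N).X :=
  inferInstanceAs (FiniteDimensional k (M.X × N.X))

lemma tensor_fd {M N : Comod k H} (hM : FiniteDimensional k M.X) (hN : FiniteDimensional k N.X) :
    FiniteDimensional k (M.tensor N).X :=
  inferInstanceAs (FiniteDimensional k (M.X ⊗[k] N.X))

lemma dsum_finrank {M N : Comod k H} (hM : FiniteDimensional k M.X)
    (hN : FiniteDimensional k N.X) :
    Module.finrank k (M.dsum N).X = Module.finrank k M.X + Module.finrank k N.X :=
  Module.finrank_prod (R := k) (M := M.X) (M' := N.X)

lemma tensor_finrank {M N : Comod k H} :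
    Module.finrank k (M.tensor N).X = Module.finrank k M.X * Module.finrank k N.X :=
  Module.finrank_tensorProduct (R := k) (S := k) (M := M.X) (M' := N.X)

/-- dimension of a class -/
noncomputable def GrSemiring.dim (G : GrSemiring k H) (r : G.R) : ℕ :=
  Module.finrank k (G.cls_surj r).choose.X

lemma GrSemiring.dim_cls (G : GrSemiring k H) (M : Comod k H) (hM : M.IsComodule)
    (hfd : FiniteDimensional k M.X) : G.dim (G.cls M) = Module.finrank k M.X := by
  obtain ⟨h1, h2, h3⟩ := (G.cls_surj (G.cls M)).choose_spec
  obtain ⟨e, -⟩ := G.cls_inj _ _ h1 hM h2 hfd h3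
  exact e.finrank_eq

lemma GrSemiring.dim_add (G : GrSemiring k H) (a b : G.R) :
    G.dim (a + b) = G.dim a + G.dim b := by
  obtain ⟨M, hM, fM, rfl⟩ := G.cls_surj a
  obtain ⟨N, hN, fN, rfl⟩ := G.cls_surj b
  rw [← G.cls_dsum M N hM hN fM fN, G.dim_cls _ hM fM, G.dim_cls _ hN fN,
    G.dim_cls _ (dsum_isComodule hM hN) (dsum_fd fM fN), dsum_finrank fM fN]

lemma GrSemiring.dim_mul (G : GrSemiring k H) (a b : G.R) :
    G.dim (a * b) = G.dim a * G.dim b := by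
  obtain ⟨M, hM, fM, rfl⟩ := G.cls_surj a
  obtain ⟨N, hN, fN, rfl⟩ := G.cls_surj b
  rw [← G.cls_tensor M N hM hN fM fN, G.dim_cls _ hM fM, G.dim_cls _ hN fN,
    G.dim_cls _ (tensor_isComodule hM hN) (tensor_fd fM fN), tensor_finrank]

lemma GrSemiring.idem_of_dim (G : GrSemiring k H) (a : G.R) (h : G.dim a = 0) :
    a + a = a := by
  obtain ⟨M, hM, fM, rfl⟩ := G.cls_surj a
  rw [G.dim_cls _ hM fM] at h
  have hs : Subsingleton M.X := Module.finrank_zero_iff.1 h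
  have hs2 : Subsingleton (M.dsum M).X := inferInstanceAs (Subsingleton (M.X × M.X))
  rw [← G.cls_dsum M M hM hM fM fM]
  refine G.cls_iso _ _ (dsum_isComodule hM hM) hM (dsum_fd fM fM) fM ⟨?_, ?_⟩
  · exact LinearEquiv.ofSubsingleton _ _
  · apply LinearMap.ext
    intro x
    rw [Subsingleton.elim x 0, map_zero, map_zero]

lemma dim_pos {K : Type} [Ring K] [HopfAlgebra k K] (GH : GrSemiring k H) (GK : GrSemiring k K)
    (f : GH.R ≃+* GK.R) (a : GH.R) (h : GK.dim (f a) = 0) : GH.dim a = 0 := by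
  have h1 := GK.idem_of_dim _ h
  rw [← map_add] at h1
  have h2 := f.injective h1
  have h3 := GH.dim_add a a
  rw [h2] at h3
  omega

lemma main_bound {K : Type} [Ring K] [HopfAlgebra k K] (hH : IsCosemisimple k H)
    (GH : GrSemiring k H) (GK : GrSemiring k K) (f : GH.R ≃+* GK.R) (W : Submodule k H)
    [FiniteDimensional k W] : ∀ (n : ℕ) (M : Comod k H), M.IsComodule → FiniteDimensional k M.X →
    Module.finrank k M.X = n → Supp M.ρ W →
    Module.finrank k M.X ≤ Module.finrank k W * GK.dim (f (GH.cls M)) := by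
  intro n
  induction n using Nat.strong_induction_on with
  | _ n ih =>
  intro M hM fM hn hS
  by_cases hs : ∀ A : Submodule k M.X, M.IsSubcomodule A → A = ⊥ ∨ A = ⊤
  · have h1 := simple_bound (ρ := M.ρ) hM hS hs
    rcases Nat.eq_zero_or_pos (GK.dim (f (GH.cls M))) with h0 | h0
    · have := dim_pos GH GK f _ h0
      rw [GH.dim_cls _ hM fM] at this
      omega
    · nlinarith
  · push Not at hs
    obtain ⟨A, hA, hA0, hA1⟩ := hs
    obtain ⟨B, hB, hAB⟩ := hH M hM A hA
    obtain ⟨σ, hσ⟩ := exists_restrict M.ρ A hA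
    obtain ⟨τ, hτ⟩ := exists_restrict M.ρ B hB
    let CA : Comod k H := { X := A, ρ := σ }
    let CB : Comod k H := { X := B, ρ := τ }
    have cA : CA.IsComodule := Coact_sub (ρ := σ) (σ := M.ρ) hM _ hσ A.injective_subtype
    have cB : CB.IsComodule := Coact_sub (ρ := τ) (σ := M.ρ) hM _ hτ B.injective_subtype
    have fA : FiniteDimensional k CA.X := inferInstanceAs (FiniteDimensional k A)
    have fB : FiniteDimensional k CB.X := inferInstanceAs (FiniteDimensional k B)
    have sA : Supp CA.ρ W := Supp_sub (ρ := σ) hS _ hσ A.injective_subtype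
    have sB : Supp CB.ρ W := Supp_sub (ρ := τ) hS _ hτ B.injective_subtype
    have hfr : Module.finrank k A + Module.finrank k B = Module.finrank k M.X :=
      Submodule.finrank_add_eq_of_isCompl hAB
    have hlt : Module.finrank k A < Module.finrank k M.X :=
      Submodule.finrank_lt hA1
    have hpos : 0 < Module.finrank k A := by
      rw [Nat.pos_iff_ne_zero]
      intro h
      exact hA0 (Submodule.finrank_eq_zero.1 h)
    have bA : Module.finrank k A ≤ Module.finrank k W * GK.dim (f (GH.cls CA)) :=
      ih (Module.finrank k A) (by omega) CA cA fA rfl sA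
    have bB : Module.finrank k B ≤ Module.finrank k W * GK.dim (f (GH.cls CB)) :=
      ih (Module.finrank k B) (by omega) CB cB fB rfl sB
    have hiso : Comod.Iso (CA.dsum CB) M := by
      refine ⟨Submodule.prodEquivOfIsCompl A B hAB, ?_⟩
      change M.ρ ∘ₗ (Submodule.prodEquivOfIsCompl A B hAB).toLinearMap =
        (Submodule.prodEquivOfIsCompl A B hAB).toLinearMap.rTensor H ∘ₗ Dsum σ τ
      have e1 : (Submodule.prodEquivOfIsCompl A B hAB).toLinearMap ∘ₗ LinearMap.inl k A B =
        A.subtype := by ext; simp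
      have e2 : (Submodule.prodEquivOfIsCompl A B hAB).toLinearMap ∘ₗ LinearMap.inr k A B =
        B.subtype := by ext; simp
      apply LinearMap.prod_ext
      · rw [LinearMap.comp_assoc, e1, hσ, ← e1, LinearMap.rTensor_comp]
        ext x; simp [Dsum]
      · rw [LinearMap.comp_assoc, e2, hτ, ← e2, LinearMap.rTensor_comp]
        ext x; simp [Dsum]
    have hcls : GH.cls M = GH.cls CA + GH.cls CB := by
      rw [← GH.cls_dsum CA CB cA cB fA fB]
      exact (GH.cls_iso _ _ (dsum_isComodule cA cB) hM (dsum_fd fA fB) fM hiso).symm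
    rw [hcls, map_add, GK.dim_add, mul_add, ← hfr]
    exact add_le_add bA bB

/-- tensor powers, shifted by one -/
noncomputable def pw (X : Comod k H) : ℕ → Comod k H
  | 0 => X
  | n + 1 => (pw X n).tensor X

lemma pw_spec (G : GrSemiring k H) (X : Comod k H) (hX : X.IsComodule)
    (fX : FiniteDimensional k X.X) (W : Submodule k H) (hW : Supp X.ρ W) (n : ℕ) :
    (pw X n).IsComodule ∧ FiniteDimensional k (pw X n).X ∧ Supp (pw X n).ρ (W ^ (n + 1)) ∧
    Module.finrank k (pw X n).X = Module.finrank k X.X ^ (n + 1) ∧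
    G.cls (pw X n) = G.cls X ^ (n + 1) := by
  induction n with
  | zero => exact ⟨hX, fX, by rw [zero_add, pow_one]; exact hW, by rw [zero_add, pow_one]; rfl, by simp [pw]⟩
  | succ n ih =>
    obtain ⟨a, b, c, d, e⟩ := ih
    refine ⟨tensor_isComodule a hX, tensor_fd b fX, ?_, ?_, ?_⟩
    · rw [pow_succ]
      exact Supp_tensor (ρ := (pw X n).ρ) (σ := X.ρ) c hW
    · rw [pow_succ, ← d]; exact tensor_finrank
    · rw [pow_succ, ← e]; exact G.cls_tensor _ _ a hX b fX

lemma exists_supp (X : Comod k H) (fX : FiniteDimensional k X.X) :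
    ∃ W : Submodule k H, FiniteDimensional k W ∧ Supp X.ρ W := by
  let b := Module.finBasis k X.X
  obtain ⟨W, hW, hs⟩ := TensorProduct.exists_finite_submodule_right_of_setFinite
    (Set.range (fun i => X.ρ (b i))) (Set.finite_range _)
  refine ⟨W, hW, fun x => ?_⟩
  rw [← b.sum_repr x, map_sum]
  refine Submodule.sum_mem _ fun i _ => ?_
  rw [map_smul]
  exact Submodule.smul_mem _ _ (hs ⟨i, rfl⟩)

lemma GrSemiring.dim_pow (G : GrSemiring k H) (a : G.R) (n : ℕ) :
    G.dim (a ^ (n + 1)) = G.dim a ^ (n + 1) := by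
  induction n with
  | zero => simp
  | succ n ih => rw [pow_succ, G.dim_mul, ih, ← pow_succ]

end aux2

lemma growth (u : ℕ → ℕ) (d e : ℕ) (he : 0 < e) (h : e < d)
    (hu : ∀ n, d ^ (n + 1) ≤ u (n + 1) * e ^ (n + 1)) :
    Filter.limsup (fun n : ℕ => ENNReal.ofReal (Real.log (u n) / Real.log n)) Filter.atTop = ⊤ := by
  apply Filter.Tendsto.limsup_eq
  apply ENNReal.tendsto_ofReal_atTop.comp
  have he' : (0 : ℝ) < e := by exact_mod_cast he
  have hc : (1 : ℝ) < (d : ℝ) / e := by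
    rw [one_lt_div he']; exact_mod_cast h
  have hl : 0 < Real.log ((d : ℝ) / e) := Real.log_pos hc
  have t0 : Filter.Tendsto (fun n : ℕ => Real.log n / (n : ℝ)) Filter.atTop (nhds 0) :=
    (Real.isLittleO_log_id_atTop.tendsto_div_nhds_zero).comp tendsto_natCast_atTop_atTop
  have t1 : Filter.Tendsto (fun n : ℕ => (n : ℝ) / Real.log n) Filter.atTop Filter.atTop := by
    have : Filter.Tendsto (fun n : ℕ => Real.log n / (n : ℝ)) Filter.atTop
        (nhdsWithin 0 (Set.Ioi 0)) := by
      rw [tendsto_nhdsWithin_iff]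
      refine ⟨t0, ?_⟩
      filter_upwards [Filter.eventually_ge_atTop 2] with n hn
      have : (1 : ℝ) < n := by exact_mod_cast hn
      exact div_pos (Real.log_pos this) (by linarith)
    have := this.inv_tendsto_nhdsGT_zero
    refine this.congr fun n => ?_
    simp
  refine Filter.tendsto_atTop_mono' _ ?_ (t1.const_mul_atTop hl)
  filter_upwards [Filter.eventually_ge_atTop 2] with n hn
  have hn1 : (1 : ℝ) < n := by exact_mod_cast hn
  have hln := Real.log_pos hn1
  rw [← mul_div_assoc]
  apply div_le_div_of_nonneg_right _ hln.le
  obtain ⟨m, rfl⟩ : ∃ m, n = m + 1 := ⟨n - 1, by omega⟩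
  have h1 : (d : ℝ) ^ (m + 1) ≤ u (m + 1) * (e : ℝ) ^ (m + 1) := by exact_mod_cast hu m
  have h2 : ((d : ℝ) / e) ^ (m + 1) ≤ u (m + 1) := by
    rw [div_pow, div_le_iff₀ (by positivity)]; exact h1
  have h3 := Real.log_le_log (by positivity) h2
  rw [Real.log_pow] at h3
  linarith

/-- Lemma 3.6 of the paper.  Let `H` and `K` be finitely
generated cosemisimple Hopf algebras over an algebraically closed field with a
semiring isomorphism `f : R_+(H) ≅ R_+(K)` of their Grothendieck semirings.
If there is a class `[X] ∈ R_+(H)` with `dim X > dim f([X])`, then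
`GKdim H = ∞`. -/
theorem stmt6 (k : Type) [Field k] [IsAlgClosed k]
    (H : Type) [Ring H] [HopfAlgebra k H]
    (K : Type) [Ring K] [HopfAlgebra k K]
    (hH : IsCosemisimple k H) (hK : IsCosemisimple k K)
    (hfgH : Algebra.FiniteType k H) (hfgK : Algebra.FiniteType k K)
    (GH : GrSemiring k H) (GK : GrSemiring k K)
    (f : GH.R ≃+* GK.R)
    (X : Comod k H) (hX : X.IsComodule) (hXfd : FiniteDimensional k X.X)
    (X' : Comod k K) (hX' : X'.IsComodule) (hX'fd : FiniteDimensional k X'.X)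
    (hcls : GK.cls X' = f (GH.cls X))
    (hdim : Module.finrank k X'.X < Module.finrank k X.X) :
    GKdim k H = ⊤ := by
  obtain ⟨W, fW, hW⟩ := exists_supp X hXfd
  have hd : GK.dim (f (GH.cls X)) = Module.finrank k X'.X := by
    rw [← hcls, GK.dim_cls _ hX' hX'fd]
  have hpos : 0 < Module.finrank k X'.X := by
    rw [Nat.pos_iff_ne_zero]
    intro h0
    have := dim_pos GH GK f _ (hd.trans h0)
    rw [GH.dim_cls _ hX hXfd] at this
    omega
  have hg := growth (fun n => Module.finrank k ↥(W ^ n)) (Module.finrank k X.X)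
    (Module.finrank k X'.X) hpos hdim (by
      intro n
      obtain ⟨a, b, c, d, e⟩ := pw_spec GH X hX hXfd W hW n
      have hfg : (W ^ (n + 1)).FG := Submodule.FG.pow (Module.Finite.iff_fg.1 fW) _
      have : FiniteDimensional k ↥(W ^ (n + 1)) := Module.Finite.iff_fg.2 hfg
      have := main_bound hH GH GK f (W ^ (n + 1)) _ (pw X n) a b rfl c
      rwa [d, e, map_pow, GK.dim_pow, hd] at this)
  rw [eq_top_iff, ← hg]
  exact le_iSup₂_of_le W fW le_rfl
end

section
/- Let H and K be cosemisimple Hopf algebras over an algebraically closed field with a semiring isomorphism f : R_+(H) → R_+(K), and let [X] ∈ R_+(H) with dim X > dim f(X). Then for every n ≥ 1 there exists a simple H-comodule S_n that is a direct summand of X^{⊗n} and satisfies dim S_n ≥ (dim X / dim f(X))^n. -/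
/-!
Background definitions: comodules over a Hopf algebra, simple comodules, direct
summands, supports, subcoalgebras, cosemisimplicity, Gelfand-Kirillov dimension,
and (measured) Grothendieck semirings of cosemisimple Hopf algebras.
-/

open TensorProduct

namespace Comod

variable {k : Type} [Field k] {H : Type} [Ring H] [HopfAlgebra k H]

theorem IsHom.apply {M N : Comod k H} {f : M.X →ₗ[k] N.X} (h : IsHom M N f) (x : M.X) :
    N.ρ (f x) = f.rTensor H (M.ρ x) := LinearMap.congr_fun h x

/-- Left-hand side of coassociativity. -/
noncomputable def coL (M : Comod k H) : M.X →ₗ[k] (M.X ⊗[k] H) ⊗[k] H :=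
  M.ρ.rTensor H ∘ₗ M.ρ

/-- Right-hand side of coassociativity. -/
noncomputable def coR (M : Comod k H) : M.X →ₗ[k] (M.X ⊗[k] H) ⊗[k] H :=
  (TensorProduct.assoc k M.X H H).symm.toLinearMap
        ∘ₗ (Coalgebra.comul (R := k) (A := H)).lTensor M.X ∘ₗ M.ρ

/-- Counit map. -/
noncomputable def coU (M : Comod k H) : M.X →ₗ[k] M.X :=
  (TensorProduct.rid k M.X).toLinearMap
      ∘ₗ (Coalgebra.counit (R := k) (A := H)).lTensor M.X ∘ₗ M.ρ

theorem isComodule_iff_s7 (M : Comod k H) :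
    M.IsComodule ↔ M.coL = M.coR ∧ M.coU = LinearMap.id := Iff.rfl

theorem coL_hom {M N : Comod k H} {f : M.X →ₗ[k] N.X} (h : IsHom M N f) (x : M.X) :
    N.coL (f x) = (f.rTensor H).rTensor H (M.coL x) := by
  simp only [coL, LinearMap.comp_apply, h.apply]
  rw [← LinearMap.comp_apply, ← LinearMap.rTensor_comp, h, LinearMap.rTensor_comp]
  rfl

theorem assoc_symm_nat {A B : Type} [AddCommGroup A] [Module k A] [AddCommGroup B] [Module k B]
    (f : A →ₗ[k] B) (z : A ⊗[k] (H ⊗[k] H)) :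
    (TensorProduct.assoc k B H H).symm (f.rTensor (H ⊗[k] H) z) =
      (f.rTensor H).rTensor H ((TensorProduct.assoc k A H H).symm z) := by
  induction z with
  | zero => simp
  | add a b ha hb => simp only [map_add, ha, hb]
  | tmul a w =>
    induction w with
    | zero => simp
    | add a b ha hb => simp only [TensorProduct.tmul_add, map_add, ha, hb]
    | tmul b c => simp

theorem coR_hom {M N : Comod k H} {f : M.X →ₗ[k] N.X} (h : IsHom M N f) (x : M.X) :
    N.coR (f x) = (f.rTensor H).rTensor H (M.coR x) := by
  simp only [coR, LinearMap.comp_apply, h.apply, LinearEquiv.coe_coe]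
  rw [← assoc_symm_nat]
  congr 1
  generalize M.ρ x = z
  induction z with
  | zero => simp
  | add a b ha hb => simp only [map_add, ha, hb]
  | tmul a w => simp

theorem coU_hom {M N : Comod k H} {f : M.X →ₗ[k] N.X} (h : IsHom M N f) (x : M.X) :
    N.coU (f x) = f (M.coU x) := by
  simp only [coU, LinearMap.comp_apply, h.apply, LinearEquiv.coe_coe]
  generalize M.ρ x = z
  induction z with
  | zero => simp
  | add a b ha hb => simp only [map_add, ha, hb]
  | tmul a w => simp

theorem IsComodule.of_injective {M N : Comod k H} {f : M.X →ₗ[k] N.X} (h : IsHom M N f)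
    (hf : Function.Injective f) (hN : N.IsComodule) : M.IsComodule := by
  rw [isComodule_iff_s7] at *
  constructor
  · ext x
    have h1 : Function.Injective ((f.rTensor H).rTensor H) :=
      Module.Flat.rTensor_preserves_injective_linearMap _
        (Module.Flat.rTensor_preserves_injective_linearMap _ hf)
    apply h1
    rw [← coL_hom h, ← coR_hom h, hN.1]
  · ext x
    apply hf
    rw [← coU_hom h, hN.2]
    rfl

theorem IsComodule.dsum {M N : Comod k H} (hM : M.IsComodule) (hN : N.IsComodule) :
    (M.dsum N).IsComodule := by
  rw [isComodule_iff_s7] at *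
  constructor
  · apply LinearMap.prod_ext
    · apply LinearMap.ext
      intro x
      exact (coL_hom (inl_hom M N) x).trans (by rw [hM.1]; exact (coR_hom (inl_hom M N) x).symm)
    · apply LinearMap.ext
      intro x
      exact (coL_hom (inr_hom M N) x).trans (by rw [hN.1]; exact (coR_hom (inr_hom M N) x).symm)
  · apply LinearMap.prod_ext
    · apply LinearMap.ext
      intro x
      exact (coU_hom (inl_hom M N) x).trans (by rw [hM.2]; rfl)
    · apply LinearMap.ext
      intro x
      exact (coU_hom (inr_hom M N) x).trans (by rw [hN.2]; rfl)

/-- The map used in the tensor coaction. -/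
noncomputable def T (H : Type) [Ring H] [HopfAlgebra k H]
    (A B : Type) [AddCommGroup A] [Module k A] [AddCommGroup B] [Module k B] :
    (A ⊗[k] H) ⊗[k] (B ⊗[k] H) →ₗ[k] (A ⊗[k] B) ⊗[k] H :=
  (LinearMap.mul' k H).lTensor (A ⊗[k] B)
        ∘ₗ (TensorProduct.tensorTensorTensorComm k A H B H).toLinearMap

theorem T_tmul (A B : Type) [AddCommGroup A] [Module k A] [AddCommGroup B] [Module k B]
    (a : A) (b : B) (x y : H) :
    T (k := k) H A B ((a ⊗ₜ x) ⊗ₜ (b ⊗ₜ y)) = (a ⊗ₜ b) ⊗ₜ (x * y) := by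
  simp [T]

theorem tensor_ρ (M N : Comod k H) (a : M.X) (b : N.X) :
    (M.tensor N).ρ (a ⊗ₜ b) = T H M.X N.X (M.ρ a ⊗ₜ N.ρ b) := rfl

theorem tensor_T {A B : Type} [AddCommGroup A] [Module k A] [AddCommGroup B] [Module k B]
    (r : A →ₗ[k] A ⊗[k] H) (t : B →ₗ[k] B ⊗[k] H) (u : A ⊗[k] H) (v : B ⊗[k] H) :
    (T H A B ∘ₗ TensorProduct.map r t).rTensor H (T H A B (u ⊗ₜ v)) =
      (T H A B).rTensor H (T H (A ⊗[k] H) (B ⊗[k] H)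
        (r.rTensor H u ⊗ₜ t.rTensor H v)) := by
  induction u with
  | zero => simp
  | add a b ha hb => simp only [map_add, TensorProduct.add_tmul, ha, hb]
  | tmul a x =>
    induction v with
    | zero => simp
    | add a b ha hb => simp only [map_add, TensorProduct.tmul_add, ha, hb]
    | tmul b y => simp [T_tmul]

theorem T_assoc (A B : Type) [AddCommGroup A] [Module k A] [AddCommGroup B] [Module k B]
    (a : A) (b : B) (x y : H ⊗[k] H) :
    (T (k := k) H A B).rTensor H (T H (A ⊗[k] H) (B ⊗[k] H)
      ((TensorProduct.assoc k A H H).symm (a ⊗ₜ x) ⊗ₜ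
        (TensorProduct.assoc k B H H).symm (b ⊗ₜ y))) =
      (TensorProduct.assoc k (A ⊗[k] B) H H).symm ((a ⊗ₜ b) ⊗ₜ (x * y)) := by
  induction x with
  | zero => simp
  | add p q hp hq => simp only [map_add, TensorProduct.add_tmul, TensorProduct.tmul_add, add_mul, hp, hq]
  | tmul p q =>
    induction y with
    | zero => simp
    | add p q hp hq => simp only [map_add, TensorProduct.add_tmul, TensorProduct.tmul_add, mul_add, hp, hq]
    | tmul r s =>
      simp [T_tmul]

theorem T_comul (A B : Type) [AddCommGroup A] [Module k A] [AddCommGroup B] [Module k B]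
    (u : A ⊗[k] H) (v : B ⊗[k] H) :
    (T (k := k) H A B).rTensor H (T H (A ⊗[k] H) (B ⊗[k] H)
      ((TensorProduct.assoc k A H H).symm ((Coalgebra.comul (R := k) (A := H)).lTensor A u) ⊗ₜ
        (TensorProduct.assoc k B H H).symm ((Coalgebra.comul (R := k) (A := H)).lTensor B v))) =
      (TensorProduct.assoc k (A ⊗[k] B) H H).symm
        ((Coalgebra.comul (R := k) (A := H)).lTensor (A ⊗[k] B) (T H A B (u ⊗ₜ v))) := by
  induction u with
  | zero => simp
  | add p q hp hq => simp only [map_add, TensorProduct.add_tmul, hp, hq]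
  | tmul a x =>
    induction v with
    | zero => simp
    | add p q hp hq => simp only [map_add, TensorProduct.tmul_add, hp, hq]
    | tmul b y =>
      rw [T_tmul, LinearMap.lTensor_tmul, LinearMap.lTensor_tmul, LinearMap.lTensor_tmul, T_assoc,
        Bialgebra.comul_mul]

theorem T_counit (A B : Type) [AddCommGroup A] [Module k A] [AddCommGroup B] [Module k B]
    (u : A ⊗[k] H) (v : B ⊗[k] H) :
    (TensorProduct.rid k (A ⊗[k] B))
      ((Coalgebra.counit (R := k) (A := H)).lTensor (A ⊗[k] B) (T H A B (u ⊗ₜ v))) =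
    (TensorProduct.rid k A) ((Coalgebra.counit (R := k) (A := H)).lTensor A u) ⊗ₜ
    (TensorProduct.rid k B) ((Coalgebra.counit (R := k) (A := H)).lTensor B v) := by
  induction u with
  | zero => simp
  | add p q hp hq => simp only [map_add, TensorProduct.add_tmul, hp, hq]
  | tmul a x =>
    induction v with
    | zero => simp
    | add p q hp hq => simp only [map_add, TensorProduct.tmul_add, hp, hq]
    | tmul b y =>
      rw [T_tmul]
      simp [TensorProduct.smul_tmul', TensorProduct.tmul_smul, smul_smul, mul_comm]

theorem IsComodule.tensor {M N : Comod k H} (hM : M.IsComodule) (hN : N.IsComodule) :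
    (M.tensor N).IsComodule := by
  constructor
  · refine TensorProduct.ext' fun a b => ?_
    have h1 := LinearMap.congr_fun hM.1 a
    have h2 := LinearMap.congr_fun hN.1 b
    simp only [LinearMap.comp_apply, LinearEquiv.coe_coe] at h1 h2
    refine (tensor_T M.ρ N.ρ (M.ρ a) (N.ρ b)).trans ?_
    rw [h1, h2]
    exact T_comul _ _ _ _
  · refine TensorProduct.ext' fun a b => ?_
    have h1 := LinearMap.congr_fun hM.2 a
    have h2 := LinearMap.congr_fun hN.2 b
    simp only [LinearMap.comp_apply, LinearEquiv.coe_coe, LinearMap.id_apply] at h1 h2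
    refine (T_counit M.X N.X (M.ρ a) (N.ρ b)).trans ?_
    rw [h1, h2]
    rfl

theorem tpow_spec {M : Comod k H} (hM : M.IsComodule) (hfd : FiniteDimensional k M.X)
    (G : GrSemiring k H) (n : ℕ) :
    (M.tpow (n + 1)).IsComodule ∧ FiniteDimensional k (M.tpow (n + 1)).X ∧
      Module.finrank k (M.tpow (n + 1)).X = Module.finrank k M.X ^ (n + 1) ∧
      G.cls (M.tpow (n + 1)) = G.cls M ^ (n + 1) := by
  induction n with
  | zero => exact ⟨hM, hfd, (pow_one _).symm, (pow_one _).symm⟩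
  | succ n ih =>
    obtain ⟨h1, h2, h3, h4⟩ := ih
    refine ⟨h1.tensor hM, ?_, ?_, ?_⟩
    · exact inferInstanceAs (FiniteDimensional k ((M.tpow (n + 1)).X ⊗[k] M.X))
    · rw [pow_succ, ← h3]
      exact Module.finrank_tensorProduct
    · rw [pow_succ, ← h4]
      exact G.cls_tensor _ _ h1 hM h2 hfd

/-- Restriction of the coaction to a subspace, using a linear retraction `p`. -/
noncomputable def restr (M : Comod k H) (N : Submodule k M.X) (p : M.X →ₗ[k] N) : Comod k H where
  X := N
  ρ := p.rTensor H ∘ₗ M.ρ ∘ₗ N.subtype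

theorem restr_incl (M : Comod k H) (N : Submodule k M.X) (p : M.X →ₗ[k] N)
    (hp : p ∘ₗ N.subtype = LinearMap.id) (hN : M.IsSubcomodule N) :
    IsHom (M.restr N p) M N.subtype := by
  refine LinearMap.ext fun x => ?_
  obtain ⟨y, hy⟩ := hN x.1 x.2
  change M.ρ x.1 = N.subtype.rTensor H (p.rTensor H (M.ρ x.1))
  rw [← hy, ← LinearMap.comp_apply (p.rTensor H), ← LinearMap.rTensor_comp, hp]
  simp

theorem restr_proj (M : Comod k H) (N N' : Submodule k M.X) (p : M.X →ₗ[k] N)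
    (hp : p ∘ₗ N.subtype = LinearMap.id) (hp' : p ∘ₗ N'.subtype = 0)
    (hN' : M.IsSubcomodule N') (hc : IsCompl N N') :
    IsHom M (M.restr N p) p := by
  refine LinearMap.ext fun x => ?_
  have hx : x ∈ N ⊔ N' := by rw [hc.sup_eq_top]; trivial
  obtain ⟨a, ha, b, hb, rfl⟩ := Submodule.mem_sup.1 hx
  have e1 : p a = ⟨a, ha⟩ := LinearMap.congr_fun hp ⟨a, ha⟩
  have e2 : p b = 0 := LinearMap.congr_fun hp' ⟨b, hb⟩
  have e3 : p.rTensor H (M.ρ b) = 0 := by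
    obtain ⟨y, hy⟩ := hN' b hb
    rw [← hy, ← LinearMap.comp_apply (p.rTensor H), ← LinearMap.rTensor_comp, hp']
    simp
  change p.rTensor H (M.ρ (p (a + b)).1) = p.rTensor H (M.ρ (a + b))
  rw [map_add, map_add, map_add, e1, e2, e3, add_zero, add_zero]

theorem iso_of_homs {A B M : Comod k H} {i : A.X →ₗ[k] M.X} {j : B.X →ₗ[k] M.X}
    (hi : IsHom A M i) (hj : IsHom B M j) (e : (A.X × B.X) ≃ₗ[k] M.X)
    (ei : ∀ x, e (x, 0) = i x) (ej : ∀ x, e (0, x) = j x) : Iso (A.dsum B) M := by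
  have k1 : e.toLinearMap ∘ₗ LinearMap.inl k A.X B.X = i := LinearMap.ext ei
  have k2 : e.toLinearMap ∘ₗ LinearMap.inr k A.X B.X = j := LinearMap.ext ej
  refine ⟨e, LinearMap.ext fun x => ?_⟩
  change M.ρ (e x) = e.toLinearMap.rTensor H ((LinearMap.inl k A.X B.X).rTensor H (A.ρ x.1) +
    (LinearMap.inr k A.X B.X).rTensor H (B.ρ x.2))
  have hx : e x = i x.1 + j x.2 := by
    rw [← ei, ← ej, ← map_add]
    congr 1
    exact Prod.ext (add_zero _).symm (zero_add _).symm
  rw [hx, map_add, map_add, ← LinearMap.comp_apply (e.toLinearMap.rTensor H),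
    ← LinearMap.comp_apply (e.toLinearMap.rTensor H), ← LinearMap.rTensor_comp,
    ← LinearMap.rTensor_comp, k1, k2, hi.apply, hj.apply]

theorem exists_split {M : Comod k H} (hM : M.IsComodule) (N N' : Submodule k M.X)
    (hN : M.IsSubcomodule N) (hN' : M.IsSubcomodule N') (hc : IsCompl N N') :
    ∃ A B : Comod k H, A.IsComodule ∧ B.IsComodule ∧ DirectSummand A M ∧ DirectSummand B M ∧
      Iso (A.dsum B) M ∧ Nonempty (A.X ≃ₗ[k] N) ∧ Nonempty (B.X ≃ₗ[k] N') := by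
  obtain ⟨p, hp, hp'⟩ : ∃ p : M.X →ₗ[k] N, p ∘ₗ N.subtype = LinearMap.id ∧
      p ∘ₗ N'.subtype = 0 := by
    refine ⟨N.projectionOnto N' hc, ?_, ?_⟩ <;> ext x <;> simp
  obtain ⟨q, hq, hq'⟩ : ∃ p : M.X →ₗ[k] N', p ∘ₗ N'.subtype = LinearMap.id ∧
      p ∘ₗ N.subtype = 0 := by
    refine ⟨N'.projectionOnto N hc.symm, ?_, ?_⟩ <;> ext x <;> simp
  have i1 := restr_incl M N p hp hN
  have i2 := restr_incl M N' q hq hN'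
  have j1 := restr_proj M N N' p hp hp' hN' hc
  have j2 := restr_proj M N' N q hq hq' hN hc.symm
  refine ⟨M.restr N p, M.restr N' q, IsComodule.of_injective i1 N.injective_subtype hM,
    IsComodule.of_injective i2 N'.injective_subtype hM, ⟨N.subtype, p, i1, j1, hp⟩,
    ⟨N'.subtype, q, i2, j2, hq⟩, ?_, ⟨LinearEquiv.refl k N⟩, ⟨LinearEquiv.refl k N'⟩⟩
  refine iso_of_homs (A := M.restr N p) (B := M.restr N' q) i1 i2
    (Submodule.prodEquivOfIsCompl N N' hc) ?_ ?_
  · have h : ∀ x : N, Submodule.prodEquivOfIsCompl N N' hc (x, 0) = N.subtype x :=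
      fun x => by simp
    exact h
  · have h : ∀ x : N', Submodule.prodEquivOfIsCompl N N' hc (0, x) = N'.subtype x :=
      fun x => by simp
    exact h

theorem DirectSummand.trans {A B C : Comod k H} (h : DirectSummand A B) (h' : DirectSummand B C) :
    DirectSummand A C := by
  obtain ⟨i, p, hi, hp, e⟩ := h
  obtain ⟨j, q, hj, hq, e'⟩ := h'
  refine ⟨j ∘ₗ i, p ∘ₗ q, ?_, ?_, ?_⟩
  · refine LinearMap.ext fun x => ?_
    simp only [LinearMap.comp_apply, hj.apply, hi.apply, LinearMap.rTensor_comp]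
  · refine LinearMap.ext fun x => ?_
    simp only [LinearMap.comp_apply, hp.apply, hq.apply, LinearMap.rTensor_comp]
  · rw [LinearMap.comp_assoc, ← LinearMap.comp_assoc i, e', LinearMap.id_comp, e]

theorem DirectSummand.rfl' (A : Comod k H) : DirectSummand A A := by
  refine ⟨LinearMap.id, LinearMap.id, ?_, ?_, rfl⟩ <;>
  · refine LinearMap.ext fun x => ?_
    simp

theorem isComodule_of_subsingleton (Z : Comod k H) [Subsingleton Z.X] : Z.IsComodule := by
  constructor <;> refine LinearMap.ext fun x => ?_ <;>
  · rw [Subsingleton.elim x 0]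
    simp

theorem cls_eq_zero (G : GrSemiring k H) (Z : Comod k H) [Subsingleton Z.X] : G.cls Z = 0 := by
  obtain ⟨M, hM, hfd, h0⟩ := G.cls_surj 0
  have hZ := isComodule_of_subsingleton Z
  have hZfd : FiniteDimensional k Z.X := inferInstance
  have h1 := G.cls_dsum M Z hM hZ hfd hZfd
  have hDfd : FiniteDimensional k (M.dsum Z).X := inferInstanceAs (FiniteDimensional k (M.X × Z.X))
  have h2 : Iso M (M.dsum Z) := by
    refine ⟨LinearEquiv.ofBijective (LinearMap.inl k M.X Z.X)
      ⟨LinearMap.inl_injective, fun y => ⟨y.1, Prod.ext rfl (Subsingleton.elim _ _)⟩⟩, ?_⟩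
    exact inl_hom M Z
  have h3 := G.cls_iso M (M.dsum Z) hM (hM.dsum hZ) hfd hDfd h2
  rw [h1, h0, zero_add] at h3
  exact h3.symm

theorem subsingleton_of_cls (G : GrSemiring k H) (M : Comod k H) (hM : M.IsComodule)
    (hfd : FiniteDimensional k M.X) (h : G.cls M = 0) : Subsingleton M.X := by
  let Z : Comod k H := { X := PUnit, ρ := 0 }
  haveI : Subsingleton Z.X := inferInstanceAs (Subsingleton PUnit)
  obtain ⟨e, -⟩ := G.cls_inj M Z hM (isComodule_of_subsingleton Z) hfd inferInstance
    (h.trans (cls_eq_zero G Z).symm)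
  exact e.toEquiv.subsingleton

end Comod

open Comod in
theorem key (k : Type) [Field k]
    (H : Type) [Ring H] [HopfAlgebra k H]
    (K : Type) [Ring K] [HopfAlgebra k K]
    (hH : IsCosemisimple k H)
    (GH : GrSemiring k H) (GK : GrSemiring k K)
    (f : GH.R ≃+* GK.R) (d : ℕ) : ∀ (M : Comod k H) (M' : Comod k K), M.IsComodule →
    FiniteDimensional k M.X → M'.IsComodule → FiniteDimensional k M'.X →
    GK.cls M' = f (GH.cls M) → Nontrivial M.X → Module.finrank k M.X = d →
    ∃ S : Comod k H, S.IsSimple ∧ DirectSummand S M ∧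
      Module.finrank k M.X ≤ Module.finrank k S.X * Module.finrank k M'.X := by
  induction d using Nat.strong_induction_on with
  | _ d ih =>
  intro M M' hM hfd hM' hfd' hc hnt hd
  by_cases hs : M.IsSimple
  · refine ⟨M, hs, DirectSummand.rfl' M, Nat.le_mul_of_pos_right _ ?_⟩
    rw [Nat.pos_iff_ne_zero]
    intro h0
    haveI : Subsingleton M'.X := Module.finrank_zero_iff.1 h0
    rw [cls_eq_zero GK M'] at hc
    have h1 := subsingleton_of_cls GH M hM hfd (f.injective (by rw [← hc, map_zero]))
    exact not_subsingleton _ h1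
  · have : ∃ N : Submodule k M.X, M.IsSubcomodule N ∧ N ≠ ⊥ ∧ N ≠ ⊤ := by
      by_contra hcon
      push Not at hcon
      refine hs ⟨hM, hnt, hfd, fun N hN => ?_⟩
      by_cases hb : N = ⊥
      · exact Or.inl hb
      · exact Or.inr (hcon N hN hb)
    obtain ⟨N, hN, hb, ht⟩ := this
    obtain ⟨N', hN', hcompl⟩ := hH M hM N hN
    have hsum := Submodule.finrank_add_eq_of_isCompl hcompl
    have hb' : N' ≠ ⊥ := by
      rintro rfl
      exact ht (by simpa using hcompl.sup_eq_top)
    obtain ⟨A, B, hA, hB, sA, sB, hiso, ⟨eA⟩, ⟨eB⟩⟩ := exists_split hM N N' hN hN' hcompl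
    have fA : FiniteDimensional k A.X := Module.Finite.equiv eA.symm
    have fB : FiniteDimensional k B.X := Module.Finite.equiv eB.symm
    have dA := eA.finrank_eq
    have dB := eB.finrank_eq
    have pA : 0 < Module.finrank k N := by
      rw [Nat.pos_iff_ne_zero]; exact fun h => hb (Submodule.finrank_eq_zero.1 h)
    have pB : 0 < Module.finrank k N' := by
      rw [Nat.pos_iff_ne_zero]; exact fun h => hb' (Submodule.finrank_eq_zero.1 h)
    have nA : Nontrivial A.X := Module.nontrivial_of_finrank_pos (R := k) (by omega)
    have nB : Nontrivial B.X := Module.nontrivial_of_finrank_pos (R := k) (by omega)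
    obtain ⟨A', hA', fA', cA'⟩ := GK.cls_surj (f (GH.cls A))
    obtain ⟨B', hB', fB', cB'⟩ := GK.cls_surj (f (GH.cls B))
    have fD : FiniteDimensional k (A.dsum B).X := inferInstanceAs (FiniteDimensional k (A.X × B.X))
    have fD' : FiniteDimensional k (A'.dsum B').X :=
      inferInstanceAs (FiniteDimensional k (A'.X × B'.X))
    have cM : GH.cls M = GH.cls A + GH.cls B := by
      rw [← GH.cls_dsum A B hA hB fA fB]
      exact (GH.cls_iso _ _ (hA.dsum hB) hM fD hfd hiso).symm
    have cM' : GK.cls M' = GK.cls (A'.dsum B') := by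
      rw [GK.cls_dsum A' B' hA' hB' fA' fB', hc, cM, map_add, cA', cB']
    obtain ⟨e, -⟩ := GK.cls_inj _ _ hM' (hA'.dsum hB') hfd' fD' cM'
    have dM' : Module.finrank k M'.X = Module.finrank k A'.X + Module.finrank k B'.X :=
      e.finrank_eq.trans (Module.finrank_prod (R := k) (M := A'.X) (M' := B'.X))
    obtain ⟨S, S1, S2, S3⟩ := ih _ (by omega) A A' hA fA hA' fA' cA' nA rfl
    obtain ⟨R, R1, R2, R3⟩ := ih _ (by omega) B B' hB fB hB' fB' cB' nB rfl
    rcases le_total (Module.finrank k S.X) (Module.finrank k R.X) with h | h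
    · refine ⟨R, R1, R2.trans sB, ?_⟩
      have := Nat.mul_le_mul_right (Module.finrank k A'.X) h
      rw [dM', mul_add]
      omega
    · refine ⟨S, S1, S2.trans sA, ?_⟩
      have := Nat.mul_le_mul_right (Module.finrank k B'.X) h
      rw [dM', mul_add]
      omega

/-- key step in the proof of Lemma 3.6.  Let `H`, `K` be
cosemisimple Hopf algebras over an algebraically closed field with a semiring
isomorphism `f : R_+(H) ≅ R_+(K)`, and let `[X] ∈ R_+(H)` be a class with
`dim X > dim f([X])`.  Then for every `n ≥ 1` there is a simple `H`-comodule
`S_n` which is a direct summand of `X^{⊗ n}` and satisfies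
`dim S_n ≥ (dim X / dim f(X))^n`. -/
theorem stmt7 (k : Type) [Field k] [IsAlgClosed k]
    (H : Type) [Ring H] [HopfAlgebra k H]
    (K : Type) [Ring K] [HopfAlgebra k K]
    (hH : IsCosemisimple k H) (hK : IsCosemisimple k K)
    (GH : GrSemiring k H) (GK : GrSemiring k K)
    (f : GH.R ≃+* GK.R)
    (X : Comod k H) (hX : X.IsComodule) (hXfd : FiniteDimensional k X.X)
    (X' : Comod k K) (hX' : X'.IsComodule) (hX'fd : FiniteDimensional k X'.X)
    (hcls : GK.cls X' = f (GH.cls X))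
    (hdim : Module.finrank k X'.X < Module.finrank k X.X)
    (n : ℕ) (hn : 1 ≤ n) :
    ∃ Sn : Comod k H, Sn.IsSimple ∧ Comod.DirectSummand Sn (X.tpow n) ∧
      ((Module.finrank k X.X : ℝ) / (Module.finrank k X'.X : ℝ)) ^ n ≤
        (Module.finrank k Sn.X : ℝ) := by
  obtain ⟨m, rfl⟩ : ∃ m, n = m + 1 := ⟨n - 1, by omega⟩
  obtain ⟨a1, a2, a3, a4⟩ := Comod.tpow_spec hX hXfd GH m
  obtain ⟨b1, b2, b3, b4⟩ := Comod.tpow_spec hX' hX'fd GK m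
  have hpos : 0 < Module.finrank k X.X := by omega
  have hnt : Nontrivial (X.tpow (m + 1)).X :=
    Module.nontrivial_of_finrank_pos (R := k) (by rw [a3]; positivity)
  obtain ⟨S, S1, S2, S3⟩ := key k H K hH GH GK f _ _ _ a1 a2 b1 b2
    (by rw [a4, b4, hcls, map_pow]) hnt rfl
  refine ⟨S, S1, S2, ?_⟩
  rw [a3, b3] at S3
  rw [div_pow]
  apply div_le_of_le_mul₀ (by positivity) (by positivity)
  exact_mod_cast S3
end
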